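/- arXiv:1506.01775 — 4 statements merged into one kernel-verified Lean document; each statement's English description precedes it below -/
import Mathlib

section
/- For every series-parallel graph H on t ≥ 3 vertices, every graph G with average degree d(G) ≥ 2t − 4 contains H as a minor; in particular f(H) ≤ 2t − 4. -/
/-!
Write `t = k + 2`, so that `d(G) ≥ 2t - 4` says that `G` has at least `k` times as many edges as
vertices.

Contracting an edge lying in fewer than `k` triangles loses one vertex and at most `k` edges, so this
density is preserved. Contracting as long as possible yields a minor `G'` of `G` that has an edge
and in which every edge lies in at least `k` triangles (`exists_minor_triangles`).

Such a `G'` contains every `K₄`-minor-free graph `H` on at most `k + 2` vertices as a subgraph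
(`exists_embedding`). Indeed, `H` has a vertex `v` of degree at most two; deleting `v` and making its
neighbourhood a clique gives a smaller minor of `H`, which embeds by induction. The images of the
neighbours of `v` lie on a common edge `pq` of `G'`, and `p`, `q` and their common neighbours are
`k + 2` vertices or more, so there is room for `v`.

That a `K₄`-minor-free graph has a vertex of degree at most two is Dirac's theorem
(`exists_degree_le_two`). It is proved in the following form: if `ab` is an edge, and the vertices
of a nonempty set `K`, disjoint from `{a, b}`, have degree at least three and neighbours only
in `K ∪ {a, b}`, then there is a `K₄` minor (`hasMinor_K4_behind_edge`). A long path gives a cycle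
with a chord `xy`, where `x ∈ K`. If the two arcs of the cycle lie in one component of `G - x - y`,
then they extend to adjacent branch sets which together with `x` and `y` form a `K₄` minor. Otherwise
one of the two components avoids the adjacent pair `a`, `b`, and takes the role of `K` behind
the edge `xy`.
-/



open SimpleGraph

/-- `H` is a minor of `G`: there is a family of nonempty, connected,
pairwise disjoint branch sets in `G`, one for each vertex of `H`, with an
edge of `G` between the branch sets of any two adjacent vertices of `H`. -/
def HasMinor {V : Type*} {W : Type*} (G : SimpleGraph V) (H : SimpleGraph W) : Prop :=
  ∃ φ : W → Set V,
    (∀ w, (φ w).Nonempty) ∧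
    (∀ w, (G.induce (φ w)).Connected) ∧
    (Pairwise fun w w' => Disjoint (φ w) (φ w')) ∧
    (∀ ⦃w w'⦄, H.Adj w w' → ∃ u ∈ φ w, ∃ v ∈ φ w', G.Adj u v)

/-- The average degree `2|E(G)|/|V(G)|` of a graph. -/
noncomputable def avgDeg {V : Type*} (G : SimpleGraph V) : ℝ :=
  2 * Nat.card G.edgeSet / Nat.card V

/-- `f(H)`: the infimum of all `D` such that every (finite) graph with average
degree at least `D` contains `H` as a minor. -/
noncomputable def minorF {W : Type*} (H : SimpleGraph W) : ℝ :=
  sInf {D : ℝ | ∀ (V : Type) [Fintype V], ∀ G : SimpleGraph V, D ≤ avgDeg G → HasMinor G H}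


/-! ### Minors and connected sets -/

lemma induce_singleton_connected {V : Type*} (G : SimpleGraph V) (x : V) :
    (G.induce ({x} : Set V)).Connected := by
  rw [connected_iff]
  exact ⟨.of_subsingleton, ⟨⟨x, rfl⟩⟩⟩

lemma induce_union_connected_of_adj {V : Type*} {G : SimpleGraph V} {s t : Set V}
    (hs : (G.induce s).Connected) (ht : (G.induce t).Connected) {u v : V}
    (hu : u ∈ s) (hv : v ∈ t) (huv : G.Adj u v) : (G.induce (s ∪ t)).Connected :=
  connected_induce_union hs.preconnected ht.preconnected hu hv huv

lemma hasMinor_of_injective_hom {V W : Type*} {G : SimpleGraph V} {H : SimpleGraph W}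
    (f : W → V) (hf : Function.Injective f) (hadj : ∀ x y, H.Adj x y → G.Adj (f x) (f y)) :
    HasMinor G H := by
  refine ⟨fun w => {f w}, fun w => ⟨_, rfl⟩, fun w => induce_singleton_connected _ _, ?_, ?_⟩
  · intro w w' h
    simpa using fun h' => h (hf h')
  · intro w w' h
    exact ⟨_, rfl, _, rfl, hadj _ _ h⟩

/-- Blowing up a connected set along a minor model yields a connected set. -/
lemma induce_biUnion_connected {V W : Type*} {G : SimpleGraph V} {H : SimpleGraph W}
    (ψ : W → Set V) (hc : ∀ w, (G.induce (ψ w)).Connected)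
    (ha : ∀ ⦃w w'⦄, H.Adj w w' → ∃ u ∈ ψ w, ∃ v ∈ ψ w', G.Adj u v)
    (S : Set W) (hS : (H.induce S).Connected) :
    (G.induce (⋃ w ∈ S, ψ w)).Connected := by
  have hsub : ∀ w ∈ S, ψ w ⊆ ⋃ w ∈ S, ψ w := fun w hw => Set.subset_biUnion_of_mem hw
  have inner : ∀ (w : S) x y (hx : x ∈ ψ w) (hy : y ∈ ψ w),
      (G.induce (⋃ w ∈ S, ψ w)).Reachable ⟨x, hsub w w.2 hx⟩ ⟨y, hsub w w.2 hy⟩ := by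
    intro w x y hx hy
    exact ((hc w).preconnected ⟨x, hx⟩ ⟨y, hy⟩).map (G.induceHomOfLE (hsub w w.2)).toHom
  have key : ∀ (w w' : S), (H.induce S).Walk w w' → ∀ x y (hx : x ∈ ψ w) (hy : y ∈ ψ w'),
      (G.induce (⋃ w ∈ S, ψ w)).Reachable ⟨x, hsub w w.2 hx⟩ ⟨y, hsub w' w'.2 hy⟩ := by
    intro w w' p
    induction p with
    | nil => exact inner _
    | @cons a b c h p ih =>
      intro x y hx hy
      obtain ⟨u, hu, v, hv, huv⟩ := ha (show H.Adj a b from h)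
      refine (inner a x u hx hu).trans (Reachable.trans (Adj.reachable ?_) (ih v y hv hy))
      exact huv
  rw [connected_iff]
  constructor
  · rintro ⟨x, hx⟩ ⟨y, hy⟩
    obtain ⟨w, hw, hxw⟩ := Set.mem_iUnion₂.1 hx
    obtain ⟨w', hw', hyw⟩ := Set.mem_iUnion₂.1 hy
    obtain ⟨p⟩ := hS.preconnected ⟨w, hw⟩ ⟨w', hw'⟩
    exact key _ _ p x y hxw hyw
  · obtain ⟨w⟩ := hS.nonempty
    obtain ⟨x⟩ := (hc w).nonempty
    exact ⟨⟨x, hsub w w.2 x.2⟩⟩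

lemma HasMinor.trans {V W X : Type*} {G : SimpleGraph V} {H : SimpleGraph W} {K : SimpleGraph X}
    (h₁ : HasMinor G H) (h₂ : HasMinor H K) : HasMinor G K := by
  obtain ⟨ψ, hn, hc, hd, ha⟩ := h₁
  obtain ⟨φ, hn', hc', hd', ha'⟩ := h₂
  refine ⟨fun x => ⋃ w ∈ φ x, ψ w, fun x => ?_, fun x => ?_, ?_, ?_⟩
  · obtain ⟨w, hw⟩ := hn' x
    exact (hn w).mono (Set.subset_biUnion_of_mem hw)
  · exact induce_biUnion_connected ψ hc ha _ (hc' x)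
  · intro x y hxy
    simp only [Set.disjoint_iUnion_left, Set.disjoint_iUnion_right]
    intro w hw w' hw'
    refine hd ?_
    intro h
    exact Set.disjoint_left.1 (hd' hxy) hw' (by rwa [h])
  · intro x y hxy
    obtain ⟨w, hw, w', hw', hww⟩ := ha' hxy
    obtain ⟨u, hu, v, hv, huv⟩ := ha hww
    exact ⟨u, Set.mem_biUnion hw hu, v, Set.mem_biUnion hw' hv, huv⟩

/-- Contracting the edge `av` into `a` yields a minor. The graph `H'` on the remaining vertices
need only be contained in the contraction. -/
lemma hasMinor_of_contract {V : Type*} {G : SimpleGraph V} {a v : V} (hav : G.Adj a v)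
    (H' : SimpleGraph ({v}ᶜ : Set V))
    (h : ∀ x y, H'.Adj x y → G.Adj x y ∨ (x.1 = a ∧ G.Adj v y) ∨ (y.1 = a ∧ G.Adj x v)) :
    HasMinor G H' := by
  refine ⟨fun x => {x.1} ∪ {z | z = v ∧ x.1 = a}, fun x => ⟨x.1, .inl rfl⟩, fun x => ?_, ?_, ?_⟩
  · by_cases hx : x.1 = a
    · convert induce_pair_connected_of_adj hav.symm using 2 <;> (try ext z) <;> simp [hx]
    · convert induce_singleton_connected G x.1 using 2 <;> (try ext z) <;> simp [hx]
  · intro x y hxy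
    have hx := x.2
    have hy := y.2
    have hne : x.1 ≠ y.1 := fun h => hxy (Subtype.ext h)
    rw [Set.disjoint_left]
    simp only [Set.mem_union, Set.mem_singleton_iff, Set.mem_ofPred_eq, Set.mem_compl_iff] at *
    grind
  · intro x y hxy
    rcases h x y hxy with h | ⟨h1, h2⟩ | ⟨h1, h2⟩
    · exact ⟨x.1, .inl rfl, y.1, .inl rfl, h⟩
    · exact ⟨v, .inr ⟨rfl, h1⟩, y.1, .inl rfl, h2⟩
    · exact ⟨x.1, .inl rfl, v, .inr ⟨rfl, h1⟩, h2⟩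

/-! ### Minimum degree three forces a `K₄` minor -/

lemma exists_maximal_connected {V : Type*} [Finite V] (G : SimpleGraph V) {S U : Set V}
    (hS : (G.induce S).Connected) (hSU : S ⊆ U) :
    ∃ D, S ⊆ D ∧ D ⊆ U ∧ (G.induce D).Connected ∧
      ∀ u ∈ D, ∀ v ∈ U, G.Adj u v → v ∈ D := by
  obtain ⟨D, hSD, hD⟩ := (Set.toFinite {D : Set V | D ⊆ U ∧ (G.induce D).Connected}).exists_le_maximal
    (show S ∈ _ from ⟨hSU, hS⟩)
  refine ⟨D, hSD, hD.1.1, hD.1.2, fun u hu v hv huv => ?_⟩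
  have hle : D ∪ {v} ≤ D := hD.2
    ⟨Set.union_subset hD.1.1 (by simpa using hv),
      induce_union_connected_of_adj hD.1.2 (induce_singleton_connected G v) hu rfl huv⟩
    Set.subset_union_left
  exact hle (.inr rfl)

lemma induce_chain_connected {V : Type*} (G : SimpleGraph V) (x : V) (l : List V)
    (h : List.IsChain G.Adj (x :: l)) : (G.induce {v | v ∈ x :: l}).Connected := by
  induction l generalizing x with
  | nil =>
    convert induce_singleton_connected G x using 2 <;> (try ext z) <;> simp
  | cons y l ih =>
    rw [List.isChain_cons_cons] at h
    have := induce_union_connected_of_adj (induce_singleton_connected G x) (ih y h.2)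
      (u := x) (v := y) rfl (by simp) h.1
    have he : {v | v ∈ x :: y :: l} = {x} ∪ {v | v ∈ y :: l} := by
      ext v; simp
    rwa [he]

lemma hasMinor_K4_of_sets {V : Type*} {G : SimpleGraph V} {x y : V} {S T : Set V}
    (hxy : G.Adj x y) (hS : (G.induce S).Connected) (hT : (G.induce T).Connected)
    (hST : Disjoint S T) (hxS : x ∉ S) (hyS : y ∉ S) (hxT : x ∉ T) (hyT : y ∉ T)
    (axS : ∃ s ∈ S, G.Adj x s) (ayS : ∃ s ∈ S, G.Adj y s)
    (axT : ∃ s ∈ T, G.Adj x s) (ayT : ∃ s ∈ T, G.Adj y s)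
    (aST : ∃ s ∈ S, ∃ t ∈ T, G.Adj s t) :
    HasMinor G (completeGraph (Fin 4)) := by
  let φ : Fin 4 → Set V := ![{x}, {y}, S, T]
  have hlt : ∀ i j : Fin 4, i < j → Disjoint (φ i) (φ j) ∧ ∃ u ∈ φ i, ∃ v ∈ φ j, G.Adj u v := by
    intro i j hij
    fin_cases i <;> fin_cases j <;>
      simp_all [φ, hxy.ne]
  refine ⟨φ, fun i => ?_, fun i => ?_, fun i j hij => ?_, fun i j hij => ?_⟩
  · have hSn := Set.nonempty_coe_sort.1 hS.nonempty
    have hTn := Set.nonempty_coe_sort.1 hT.nonempty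
    fin_cases i <;> simp_all [φ]
  · fin_cases i
    exacts [induce_singleton_connected G x, induce_singleton_connected G y, hS, hT]
  · rcases lt_or_gt_of_ne hij with h | h
    exacts [(hlt i j h).1, (hlt j i h).1.symm]
  · rcases lt_or_gt_of_ne (show i ≠ j from hij) with h | h
    · exact (hlt i j h).2
    · obtain ⟨u, hu, v, hv, huv⟩ := (hlt j i h).2
      exact ⟨v, hv, u, hu, huv.symm⟩

/-- If the vertices of `K` have neighbours only in `K ∪ {a, b}`, then some path inside `K ∪ {a, b}`
starts in `K` and contains all neighbours of its first vertex. Such a path is grown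
backwards; whichever of `a`, `b` can be reached from `K` is put at its far end first, so that every
later extension stays in `K`. -/
lemma exists_long_path {V : Type*} [Finite V] (G : SimpleGraph V) (a b : V) (K : Set V)
    (hab : G.Adj a b) (ha : a ∉ K) (hb : b ∉ K) (hne : K.Nonempty)
    (hcl : ∀ u ∈ K, ∀ v, G.Adj u v → v ∈ K ∨ v = a ∨ v = b) :
    ∃ x l, x ∈ K ∧ List.IsChain G.Adj (x :: l) ∧ (x :: l).Nodup ∧
      (∀ v ∈ l, v ∈ K ∨ v = a ∨ v = b) ∧ ∀ v, G.Adj x v → v ∈ l := by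
  classical
  by_contra! hcon
  have grow : ∀ n : ℕ, ∃ x l, x ∈ K ∧ List.IsChain G.Adj (x :: l) ∧ (x :: l).Nodup ∧
      (∀ v ∈ l, v ∈ K ∨ v = a ∨ v = b) ∧
      (∀ u ∈ K, ∀ v, G.Adj u v → v ∉ x :: l → v ∈ K) ∧ n ≤ l.length := by
    intro n
    induction n with
    | zero =>
      by_cases h1 : ∃ x ∈ K, G.Adj x a
      · obtain ⟨x, hx, hxa⟩ := h1
        refine ⟨x, [a, b], hx, ?_, ?_, ?_, ?_, by simp⟩
        · simp [hxa, hab]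
        · have := hab.ne
          simp only [List.nodup_cons, List.mem_cons]
          grind
        · simp
        · intro u hu v huv
          have := hcl u hu v huv
          simp only [List.mem_cons]
          grind
      by_cases h2 : ∃ x ∈ K, G.Adj x b
      · obtain ⟨x, hx, hxa⟩ := h2
        refine ⟨x, [b, a], hx, ?_, ?_, ?_, ?_, by simp⟩
        · simp [hxa, hab.symm]
        · have := hab.ne
          simp only [List.nodup_cons, List.mem_cons]
          grind
        · simp
        · intro u hu v huv
          have := hcl u hu v huv
          simp only [List.mem_cons]
          grind
      · obtain ⟨x, hx⟩ := hne
        refine ⟨x, [], hx, by simp, by simp, by simp, ?_, by simp⟩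
        intro u hu v huv _
        rcases hcl u hu v huv with h | rfl | rfl
        · exact h
        · exact absurd ⟨u, hu, huv⟩ h1
        · exact absurd ⟨u, hu, huv⟩ h2
    | succ n ih =>
      obtain ⟨x, l, hx, hch, hnd, hl, hK, hn⟩ := ih
      obtain ⟨v, hxv, hv⟩ := hcon x l hx hch hnd hl
      have hvl : v ∉ x :: l := by
        simp only [List.mem_cons, not_or]
        exact ⟨hxv.ne', hv⟩
      refine ⟨v, x :: l, hK x hx v hxv hvl, ?_, ?_, ?_, ?_, ?_⟩
      · rw [List.isChain_cons_cons]; exact ⟨hxv.symm, hch⟩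
      · rw [List.nodup_cons]; exact ⟨hvl, hnd⟩
      · simpa [hx] using hl
      · intro u hu w huw hw
        exact hK u hu w huw fun h => hw (List.mem_cons_of_mem _ h)
      · simpa using hn
  have := Fintype.ofFinite V
  obtain ⟨x, l, -, -, hnd, -, -, hn⟩ := grow (Fintype.card V)
  have := hnd.length_le_card
  simp at this
  omega

/-- The core of Dirac's theorem on graphs without a `K₄` minor: behind a separating edge `ab`,
a nonempty set of vertices of degree at least three yields a `K₄` minor. Induction on `K`: a cycle
`x, S, y, T` with chord `xy` either has its two arcs `S`, `T` joined by a path avoiding `x` and `y`,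
giving `K₄`, or `xy` is again a separating edge with a smaller set behind it. -/
lemma hasMinor_K4_behind_edge {V : Type*} [Finite V] (G : SimpleGraph V) :
    ∀ (n : ℕ) (a b : V) (K : Set V), K.ncard = n → G.Adj a b → a ∉ K → b ∉ K → K.Nonempty →
      (∀ u ∈ K, ∀ v, G.Adj u v → v ∈ K ∨ v = a ∨ v = b) →
      (∀ u ∈ K, 3 ≤ (G.neighborSet u).ncard) →
      HasMinor G (completeGraph (Fin 4)) := by
  classical
  intro n
  induction n using Nat.strong_induction_on with
  | _ n ih =>
  intro a b K hKn hab ha hb hne hcl hdeg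
  obtain ⟨x, l, hx, hch, hnd, hlK, hnb⟩ := exists_long_path G a b K hab ha hb hne hcl
  have hd := hdeg x hx
  cases l with
  | nil =>
    have : G.neighborSet x = ∅ := by
      ext v; simpa using hnb v
    simp [this] at hd
  | cons x₁ l =>
  -- two further neighbours of `x` on the path, the one nearer to `x` being called `y`
  have hsplit : ∃ A y B z C, l = A ++ y :: (B ++ z :: C) ∧ G.Adj x y ∧ G.Adj x z := by
    have h1 : 1 < (G.neighborSet x \ {x₁}).ncard := by
      have := Set.le_ncard_sdiff {x₁} (G.neighborSet x)
      simp at this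
      omega
    obtain ⟨p, hp, q, hq, hpq⟩ := (Set.one_lt_ncard).1 h1
    have hpl : p ∈ l := by
      rcases List.mem_cons.1 (hnb p hp.1) with h | h
      exacts [absurd h hp.2, h]
    have hql : q ∈ l := by
      rcases List.mem_cons.1 (hnb q hq.1) with h | h
      exacts [absurd h hq.2, h]
    obtain ⟨s, t, rfl⟩ := List.append_of_mem hpl
    have : q ∈ s ∨ q ∈ t := by
      simp at hql; tauto
    rcases this with h | h
    · obtain ⟨s', t', rfl⟩ := List.append_of_mem h
      exact ⟨s', q, t', p, t, by simp, hq.1, hp.1⟩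
    · obtain ⟨s', t', rfl⟩ := List.append_of_mem h
      exact ⟨s, p, s', q, t', by simp, hp.1, hq.1⟩
  obtain ⟨A, y, B, z, C, rfl, hxy, hxz⟩ := hsplit
  rw [List.isChain_cons_cons] at hch
  obtain ⟨hxx₁, hch⟩ := hch
  have hch' : List.IsChain G.Adj ((x₁ :: A) ++ y :: (B ++ z :: C)) := by simpa using hch
  rw [List.isChain_split] at hch'
  obtain ⟨hchA, hchB⟩ := hch'
  have hchB' : List.IsChain G.Adj ((y :: B) ++ z :: C) := by simpa using hchB
  rw [List.isChain_split] at hchB'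
  have hchB := hchB'.1
  obtain ⟨T, hTdef⟩ : ∃ T : Set V, T = {v | v ∈ B ++ [z]} := ⟨_, rfl⟩
  obtain ⟨S, hSdef⟩ : ∃ S : Set V, S = {v | v ∈ x₁ :: A} := ⟨_, rfl⟩
  have hTc : (G.induce T).Connected ∧ ∃ t ∈ T, G.Adj y t := by
    subst hTdef
    cases B with
    | nil =>
      simp only [List.nil_append, List.cons_append, List.isChain_cons_cons] at hchB ⊢
      exact ⟨induce_chain_connected G z [] (by simp), z, by simp, hchB.1⟩
    | cons c B =>
      simp only [List.cons_append, List.isChain_cons_cons] at hchB ⊢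
      exact ⟨induce_chain_connected G c _ hchB.2, c, by simp, hchB.1⟩
  obtain ⟨hTc, hyT⟩ := hTc
  have hSc : (G.induce S).Connected := by
    subst hSdef
    exact induce_chain_connected G x₁ A hchA.left_of_append
  have hyS : ∃ s ∈ S, G.Adj y s := by
    subst hSdef
    have hl := List.isChain_append.1 hchA
    obtain ⟨s, hs⟩ : ∃ s, s ∈ (x₁ :: A).getLast? :=
      ⟨_, List.getLast?_eq_getLast_of_ne_nil (List.cons_ne_nil _ _)⟩
    exact ⟨s, List.mem_of_mem_getLast? hs, (hl.2.2 s hs y (by simp)).symm⟩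
  have hxS : ∃ s ∈ S, G.Adj x s := ⟨x₁, by simp [hSdef], hxx₁⟩
  have hxT : ∃ s ∈ T, G.Adj x s := ⟨z, by simp [hTdef], hxz⟩
  have hST : Disjoint S T := by
    rw [Set.disjoint_left, hSdef, hTdef]
    simp [List.nodup_append] at hnd ⊢
    grind
  have hSxy : x ∉ S ∧ y ∉ S := by
    rw [hSdef]
    simp [List.nodup_append] at hnd ⊢
    grind
  have hTxy : x ∉ T ∧ y ∉ T := by
    rw [hTdef]
    simp [List.nodup_append] at hnd ⊢
    grind
  have hSK : ∀ v ∈ S, v ∈ K ∨ v = a ∨ v = b := by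
    intro v hv
    apply hlK
    rw [hSdef] at hv
    simp at hv ⊢
    tauto
  have hTK : ∀ v ∈ T, v ∈ K ∨ v = a ∨ v = b := by
    intro v hv
    apply hlK
    rw [hTdef] at hv
    simp at hv ⊢
    tauto
  -- a component of `G - {x, y}` that avoids `a`, `b` and meets the path is a smaller instance
  have descend : ∀ D : Set V, (G.induce D).Connected → x ∉ D → y ∉ D → a ∉ D → b ∉ D →
      (∃ s ∈ D, s ∈ K ∨ s = a ∨ s = b) →
      (∀ u ∈ D, ∀ v, G.Adj u v → v ∈ D ∨ v = x ∨ v = y) →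
      HasMinor G (completeGraph (Fin 4)) := by
    rintro D hD hxD hyD haD hbD ⟨s, hs, hsK⟩ hDcl
    have hsK : s ∈ K := by
      rcases hsK with h | rfl | rfl
      exacts [h, absurd hs haD, absurd hs hbD]
    have hDK : D ⊆ K := by
      have key : ∀ u v : D, (G.induce D).Walk u v → u.1 ∈ K → v.1 ∈ K := by
        intro u v p
        induction p with
        | nil => exact id
        | @cons u v w h p ih' =>
          intro hu
          refine ih' ?_
          rcases hcl _ hu _ (show G.Adj u v from h) with h | h | h
          · exact h
          · exact absurd (h ▸ v.2) haD
          · exact absurd (h ▸ v.2) hbD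
      intro v hv
      obtain ⟨p⟩ := hD.preconnected ⟨s, hs⟩ ⟨v, hv⟩
      exact key _ _ p hsK
    have hlt : D.ncard < n := by
      rw [← hKn]
      exact Set.ncard_lt_ncard ⟨hDK, fun h => hxD (h hx)⟩
    exact ih _ hlt x y D rfl hxy hxD hyD ⟨s, hs⟩ hDcl fun u hu => hdeg u (hDK hu)
  obtain ⟨D, hSD, hDU, hDc, hDmax⟩ := exists_maximal_connected G hSc
    (U := {v | v ≠ x ∧ v ≠ y ∧ v ∉ T})
    (fun v hv => ⟨fun h => hSxy.1 (h ▸ hv), fun h => hSxy.2 (h ▸ hv),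
      Set.disjoint_left.1 hST hv⟩)
  have hxD : x ∉ D := fun h => (hDU h).1 rfl
  have hyD : y ∉ D := fun h => (hDU h).2.1 rfl
  have hDT : Disjoint D T := Set.disjoint_left.2 fun v h => (hDU h).2.2
  by_cases hadj : ∃ s ∈ D, ∃ t ∈ T, G.Adj s t
  · exact hasMinor_K4_of_sets hxy hDc hTc hDT hxD hyD hTxy.1 hTxy.2
      (hxS.imp fun _ h => ⟨hSD h.1, h.2⟩) (hyS.imp fun _ h => ⟨hSD h.1, h.2⟩) hxT hyT hadj
  have hDcl : ∀ u ∈ D, ∀ v, G.Adj u v → v ∈ D ∨ v = x ∨ v = y := by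
    intro u hu v huv
    by_contra! h
    exact h.1 (hDmax u hu v ⟨h.2.1, h.2.2, fun hv => hadj ⟨u, hu, v, hv, huv⟩⟩ huv)
  by_cases hDab : a ∉ D ∧ b ∉ D
  · obtain ⟨s, hs, -⟩ := hxS
    exact descend D hDc hxD hyD hDab.1 hDab.2 ⟨s, hSD hs, hSK s hs⟩ hDcl
  -- otherwise the component of `T` avoids `a` and `b`, as these are adjacent
  obtain ⟨E, hTE, hEU, hEc, hEmax⟩ := exists_maximal_connected G hTc
    (U := {v | v ≠ x ∧ v ≠ y ∧ v ∉ D})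
    (fun v hv => ⟨fun h => hTxy.1 (h ▸ hv), fun h => hTxy.2 (h ▸ hv),
      Set.disjoint_right.1 hDT hv⟩)
  have hEcl : ∀ u ∈ E, ∀ v, G.Adj u v → v ∈ E ∨ v = x ∨ v = y := by
    intro u hu v huv
    by_contra! h
    refine h.1 (hEmax u hu v ⟨h.2.1, h.2.2, fun hv => ?_⟩ huv)
    have h1 := hEU hu
    have h2 := hDcl v hv u huv.symm
    simp only [Set.mem_ofPred_eq] at h1
    tauto
  have hEab : a ∉ E ∧ b ∉ E := by
    constructor
    · intro h
      have h1 := hEU h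
      have h2 := fun hbD => hDcl b hbD a hab.symm
      simp only [Set.mem_ofPred_eq] at h1
      tauto
    · intro h
      have h1 := hEU h
      have h2 := fun haD => hDcl a haD b hab
      simp only [Set.mem_ofPred_eq] at h1
      tauto
  obtain ⟨s, hs, -⟩ := hxT
  exact descend E hEc (fun h => (hEU h).1 rfl) (fun h => (hEU h).2.1 rfl) hEab.1 hEab.2
    ⟨s, hTE hs, hTK s hs⟩ hEcl

/-- Dirac: a nonempty graph without a `K₄` minor has a vertex of degree at most two. -/
lemma exists_degree_le_two {V : Type*} [Finite V] [Nonempty V] (G : SimpleGraph V)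
    (hG : ¬ HasMinor G (completeGraph (Fin 4))) : ∃ v, (G.neighborSet v).ncard ≤ 2 := by
  by_contra! h
  apply hG
  obtain ⟨a⟩ := ‹Nonempty V›
  obtain ⟨b, hb⟩ : (G.neighborSet a).Nonempty :=
    (Set.ncard_pos).1 (by have := h a; omega)
  refine hasMinor_K4_behind_edge G _ a b {v | v ≠ a ∧ v ≠ b} rfl hb (by simp) (by simp) ?_ ?_ ?_
  · obtain ⟨c, hc, hcb⟩ := Set.exists_ne_of_one_lt_ncard (s := G.neighborSet a)
      (by have := h a; omega) b
    exact ⟨c, (show G.Adj a c from hc).ne', hcb⟩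
  · intro u _ v _
    simp only [Set.mem_ofPred_eq]
    tauto
  · intro u _
    exact h u

/-! ### Embedding series-parallel graphs greedily -/

/-- If every edge of `G` lies in at least `k` triangles, then a clique `F` of at most two
non-isolated vertices has a non-isolated common neighbour outside any set `U ⊇ F` of at most `k + 1`
vertices. -/
lemma exists_new_common_neighbor {V : Type*} [Finite V] {G : SimpleGraph V} {k : ℕ} {a b : V}
    (hab : G.Adj a b)
    (hk : ∀ x y, G.Adj x y → k ≤ (G.neighborSet x ∩ G.neighborSet y).ncard)
    (F U : Set V) (hF : F.ncard ≤ 2) (hcl : ∀ x ∈ F, ∀ y ∈ F, x ≠ y → G.Adj x y)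
    (hni : ∀ x ∈ F, ∃ y, G.Adj x y) (hFU : F ⊆ U) (hU : U.ncard ≤ k + 1) :
    ∃ z, z ∉ U ∧ (∃ y, G.Adj z y) ∧ ∀ x ∈ F, G.Adj z x := by
  have hedge : ∃ p q, G.Adj p q ∧ F ⊆ {p, q} := by
    obtain h | h | h : F.ncard = 0 ∨ F.ncard = 1 ∨ F.ncard = 2 := by omega
    · rw [Set.ncard_eq_zero] at h
      exact ⟨a, b, hab, by simp [h]⟩
    · obtain ⟨p, rfl⟩ := Set.ncard_eq_one.1 h
      obtain ⟨q, hq⟩ := hni p rfl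
      exact ⟨p, q, hq, by simp⟩
    · obtain ⟨p, q, hpq, rfl⟩ := Set.ncard_eq_two.1 h
      exact ⟨p, q, hcl p (by simp) q (by simp) hpq, subset_rfl⟩
  obtain ⟨p, q, hpq, hFpq⟩ := hedge
  have hcard : k + 2 ≤ (({p, q} : Set V) ∪ (G.neighborSet p ∩ G.neighborSet q)).ncard := by
    rw [Set.ncard_union_eq]
    · have := hk p q hpq
      rw [Set.ncard_pair hpq.ne]
      omega
    · rw [Set.disjoint_left]
      rintro x (rfl | rfl) h
      · exact G.loopless.irrefl _ h.1
      · exact G.loopless.irrefl _ h.2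
  obtain ⟨z, hz, hzU⟩ := Set.exists_mem_notMem_of_ncard_lt_ncard (hU.trans_lt hcard)
  refine ⟨z, hzU, ?_, fun x hx => ?_⟩
  · rcases hz with (rfl | rfl) | h
    exacts [⟨q, hpq⟩, ⟨p, hpq.symm⟩, ⟨p, h.1.symm⟩]
  · have hxz : x ≠ z := fun h => hzU (h ▸ hFU hx)
    rcases hz with (rfl | rfl) | h <;> rcases hFpq hx with rfl | rfl
    exacts [absurd rfl hxz, hpq, hpq.symm, absurd rfl hxz, h.1.symm, h.2.symm]

/-- Removing a vertex `v` of degree at most two from `H` and making its neighbourhood a clique. -/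
def reduceVertex {W : Type*} (H : SimpleGraph W) (v : W) : SimpleGraph ({v}ᶜ : Set W) where
  Adj x y := H.Adj x y ∨ (x ≠ y ∧ H.Adj v x ∧ H.Adj v y)
  symm := ⟨fun _ _ h => h.imp (fun h => h.symm) fun h => ⟨h.1.symm, h.2.2, h.2.1⟩⟩
  loopless := ⟨fun _ h => h.elim (fun h => H.loopless.irrefl _ h) fun h => h.1 rfl⟩

lemma hasMinor_reduceVertex {W : Type*} [Finite W] (H : SimpleGraph W) (v : W)
    (hv : (H.neighborSet v).ncard ≤ 2) : HasMinor H (reduceVertex H v) := by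
  by_cases h : ∃ a, H.Adj v a
  · obtain ⟨a, ha⟩ := h
    refine hasMinor_of_contract ha.symm _ ?_
    rintro x y (h | ⟨hxy, hx, hy⟩)
    · exact .inl h
    by_cases hxa : x.1 = a
    · exact .inr (.inl ⟨hxa, hy⟩)
    by_cases hya : y.1 = a
    · exact .inr (.inr ⟨hya, hx.symm⟩)
    exfalso
    have h3 : ({a, x.1, y.1} : Set W).ncard = 3 :=
      Set.ncard_eq_three.2 ⟨a, x, y, Ne.symm hxa, Ne.symm hya, fun h => hxy (Subtype.ext h), rfl⟩
    have hsub : ({a, x.1, y.1} : Set W) ⊆ H.neighborSet v := by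
      rintro z (rfl | rfl | rfl) <;> assumption
    have := Set.ncard_le_ncard hsub
    omega
  · refine hasMinor_of_injective_hom Subtype.val Subtype.val_injective ?_
    rintro x y (h' | ⟨-, hx, -⟩)
    exacts [h', absurd ⟨_, hx⟩ h]

/-- If every edge of `G` lies in at least `k` triangles, then `G` contains every graph without a
`K₄` minor on at most `k + 2` vertices as a subgraph. Avoiding isolated vertices of `G` keeps
the induction going. -/
lemma exists_embedding {V : Type*} [Finite V] {G : SimpleGraph V} {k : ℕ} {a b : V}
    (hab : G.Adj a b)
    (hk : ∀ x y, G.Adj x y → k ≤ (G.neighborSet x ∩ G.neighborSet y).ncard) :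
    ∀ (n : ℕ) (W : Type) [Finite W] (H : SimpleGraph W), Nat.card W = n → n ≤ k + 2 →
      ¬ HasMinor H (completeGraph (Fin 4)) →
      ∃ f : W → V, Function.Injective f ∧ (∀ x y, H.Adj x y → G.Adj (f x) (f y)) ∧
        ∀ x, ∃ y, G.Adj (f x) y := by
  classical
  intro n
  induction n with
  | zero =>
    intro W _ H hW _ _
    have : IsEmpty W := by
      rcases Nat.card_eq_zero.1 hW with h | h
      exacts [h, absurd ‹Finite W› (not_finite_iff_infinite.2 h)]
    exact ⟨isEmptyElim, fun x => isEmptyElim x, fun x => isEmptyElim x, fun x => isEmptyElim x⟩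
  | succ n ih =>
    intro W _ H hW hn hH
    have : Nonempty W := (Nat.card_pos_iff.1 (by omega)).1
    obtain ⟨v, hv⟩ := exists_degree_le_two H hH
    have hcard : Nat.card ({v}ᶜ : Set W) = n := by
      have := Set.ncard_add_ncard_compl ({v} : Set W)
      rw [Set.ncard_singleton, hW] at this
      rw [Nat.card_coe_set_eq]
      omega
    obtain ⟨f, hf, hadj, hni⟩ := ih _ (reduceVertex H v) hcard (by omega)
      fun h => hH ((hasMinor_reduceVertex H v hv).trans h)
    have hrange : (Set.range f).ncard = n := by
      rw [← Set.image_univ, Set.ncard_image_of_injective _ hf, Set.ncard_univ, hcard]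
    obtain ⟨z, hz, hzni, hzF⟩ := exists_new_common_neighbor hab hk
      (f '' {x | H.Adj v x}) (Set.range f)
      (by
        refine (Set.ncard_image_le).trans ?_
        rw [← Set.ncard_image_of_injective _ Subtype.val_injective]
        refine (Set.ncard_le_ncard ?_).trans hv
        rintro _ ⟨x, hx, rfl⟩
        exact hx)
      (by
        rintro _ ⟨x, hx, rfl⟩ _ ⟨y, hy, rfl⟩ hxy
        exact hadj x y (.inr ⟨fun h => hxy (h ▸ rfl), hx, hy⟩))
      (by
        rintro _ ⟨x, hx, rfl⟩
        exact hni x)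
      (Set.image_subset_range _ _) (by omega)
    refine ⟨fun x => if h : x = v then z else f ⟨x, h⟩, ?_, ?_, ?_⟩
    · intro x y hxy
      by_cases hx : x = v <;> by_cases hy : y = v <;> simp only [hx, hy, dite_true, dite_false] at hxy
      · rw [hx, hy]
      · exact absurd ⟨_, hxy.symm⟩ hz
      · exact absurd ⟨_, hxy⟩ hz
      · exact congrArg Subtype.val (hf hxy)
    · intro x y hxy
      by_cases hx : x = v <;> by_cases hy : y = v <;> simp only [hx, hy, dite_true, dite_false]
      · exact absurd (hx.trans hy.symm) hxy.ne
      · exact hzF _ ⟨⟨y, hy⟩, hx ▸ hxy, rfl⟩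
      · exact (hzF _ ⟨⟨x, hx⟩, hy ▸ hxy.symm, rfl⟩).symm
      · exact hadj _ _ (.inl hxy)
    · intro x
      by_cases hx : x = v <;> simp only [hx, dite_true, dite_false]
      exacts [hzni, hni _]

/-! ### Dense graphs contract to graphs with all edges in many triangles -/

/-- The graph obtained from `G` by contracting the edge `uv` into `u`, with `v` kept as an isolated
vertex. -/
def mergeInto {V : Type*} (G : SimpleGraph V) (u v : V) : SimpleGraph V where
  Adj x y := x ≠ y ∧ x ≠ v ∧ y ≠ v ∧ (G.Adj x y ∨ (x = u ∧ G.Adj v y) ∨ (y = u ∧ G.Adj x v))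
  symm := ⟨fun _ _ h => ⟨h.1.symm, h.2.2.1, h.2.1, by
    rcases h.2.2.2 with h | h | h
    exacts [.inl h.symm, .inr (.inr ⟨h.1, h.2.symm⟩), .inr (.inl ⟨h.1, h.2.symm⟩)]⟩⟩
  loopless := ⟨fun _ h => h.1 rfl⟩

lemma ncard_edgeSet_le_mergeInto {V : Type*} [Finite V] (G : SimpleGraph V) {u v : V}
    (huv : G.Adj u v) :
    G.edgeSet.ncard ≤
      (mergeInto G u v).edgeSet.ncard + 1 + (G.neighborSet u ∩ G.neighborSet v).ncard := by
  -- `A`: edges avoiding `v`; `N`: neighbours of `v` that become new neighbours of `u`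
  let A : Set (Sym2 V) := {e | e ∈ G.edgeSet ∧ v ∉ e}
  let N : Set V := G.neighborSet v \ (G.neighborSet u ∪ {u})
  have h1 : G.edgeSet ⊆ A ∪ (fun w => s(v, w)) '' G.neighborSet v := by
    intro e he
    by_cases hv : v ∈ e
    · obtain ⟨w, rfl⟩ := hv
      exact .inr ⟨w, he, rfl⟩
    · exact .inl ⟨he, hv⟩
  have h2 : G.neighborSet v ⊆ N ∪ ({u} ∪ (G.neighborSet u ∩ G.neighborSet v)) := by
    intro w hw
    by_cases h : w ∈ G.neighborSet u ∪ {u}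
    · rcases h with h | h
      exacts [.inr (.inr ⟨h, hw⟩), .inr (.inl h)]
    · exact .inl ⟨hw, h⟩
  have h3 : A ∪ (fun w => s(u, w)) '' N ⊆ (mergeInto G u v).edgeSet := by
    rintro e (⟨he, hv⟩ | ⟨w, ⟨hw, hwu⟩, rfl⟩)
    · induction e with
      | _ x y =>
        simp only [Sym2.mem_iff, not_or] at hv
        exact ⟨he.ne, Ne.symm hv.1, Ne.symm hv.2, .inl he⟩
    · have hw' : w ≠ u := fun h => hwu (.inr h)
      exact ⟨hw'.symm, huv.ne, (show G.Adj v w from hw).ne', .inr (.inl ⟨rfl, hw⟩)⟩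
  have h4 : Disjoint A ((fun w => s(u, w)) '' N) := by
    rw [Set.disjoint_left]
    rintro _ ⟨he, -⟩ ⟨w, ⟨-, hwu⟩, rfl⟩
    exact hwu (.inl he)
  have h5 : ((fun w => s(u, w)) '' N).ncard = N.ncard :=
    Set.ncard_image_of_injective _ fun x y h => Sym2.congr_right.1 h
  have e1 := (Set.ncard_le_ncard h1).trans (Set.ncard_union_le _ _)
  have e2 := (Set.ncard_le_ncard h2).trans (Set.ncard_union_le _ _)
  have e2' := Set.ncard_union_le ({u} : Set V) (G.neighborSet u ∩ G.neighborSet v)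
  rw [Set.ncard_singleton] at e2'
  have e1' : ((fun w => s(v, w)) '' G.neighborSet v).ncard ≤ (G.neighborSet v).ncard :=
    Set.ncard_image_le
  have e3 := Set.ncard_le_ncard h3
  rw [Set.ncard_union_eq h4, h5] at e3
  omega

lemma ncard_edgeSet_induce_mergeInto {V : Type*} [Finite V] (G : SimpleGraph V) (u v : V) :
    ((mergeInto G u v).induce ({v}ᶜ : Set V)).edgeSet.ncard = (mergeInto G u v).edgeSet.ncard := by
  classical
  have := Fintype.ofFinite V
  have h := card_edgeFinset_induce_of_support_subset (G := mergeInto G u v) (s := {v}ᶜ) (by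
    rintro x ⟨y, h⟩
    exact h.2.1)
  rwa [← Set.ncard_coe_finset, ← Set.ncard_coe_finset, coe_edgeFinset, coe_edgeFinset] at h

/-- A graph with at least `k` times as many edges as vertices has a minor in which every edge lies in
at least `k` triangles: contracting an edge in fewer triangles loses at most `k` edges. -/
lemma exists_minor_triangles (k : ℕ) (hk : 1 ≤ k) :
    ∀ (n : ℕ) (V : Type) [Finite V] (G : SimpleGraph V), Nat.card V = n → 0 < n →
      k * n ≤ G.edgeSet.ncard →
      ∃ (V' : Type) (_ : Finite V') (G' : SimpleGraph V') (a b : V'), HasMinor G G' ∧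
        G'.Adj a b ∧ ∀ x y, G'.Adj x y → k ≤ (G'.neighborSet x ∩ G'.neighborSet y).ncard := by
  intro n
  induction n with
  | zero => intro V _ G _ h; omega
  | succ n ih =>
    intro V _ G hV _ hG
    by_cases hall : ∀ x y, G.Adj x y → k ≤ (G.neighborSet x ∩ G.neighborSet y).ncard
    · have hne : G.edgeSet.Nonempty := by
        rw [← Set.ncard_pos]
        exact lt_of_lt_of_le (Nat.mul_pos hk n.succ_pos) hG
      obtain ⟨e, he⟩ := hne
      induction e with
      | _ a b =>
        exact ⟨V, inferInstance, G, a, b,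
          hasMinor_of_injective_hom id Function.injective_id fun _ _ h => h, he, hall⟩
    · push Not at hall
      obtain ⟨u, v, huv, hlt⟩ := hall
      have hcard : Nat.card ({v}ᶜ : Set V) = n := by
        have := Set.ncard_add_ncard_compl ({v} : Set V)
        rw [Set.ncard_singleton, hV] at this
        rw [Nat.card_coe_set_eq]
        omega
      have hn : 0 < n := by
        have : Nonempty ({v}ᶜ : Set V) := ⟨⟨u, huv.ne⟩⟩
        rw [← hcard]
        exact Nat.card_pos
      have hE := ncard_edgeSet_le_mergeInto G huv
      have hmul : k * (n + 1) = k * n + k := by ring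
      obtain ⟨V', hV', G', a, b, hm, hab, hG'⟩ := ih ({v}ᶜ : Set V)
        ((mergeInto G u v).induce _) hcard hn
        (by rw [ncard_edgeSet_induce_mergeInto]; omega)
      refine ⟨V', hV', G', a, b, .trans (hasMinor_of_contract huv _ ?_) hm, hab, hG'⟩
      intro x y hxy
      exact hxy.2.2.2

/-- For every series-parallel graph `H` (i.e. one with no `K₄` minor) on
`t ≥ 3` vertices, every graph `G` with average degree `d(G) ≥ 2t − 4` contains `H` as
a minor; in particular `f(H) ≤ 2t − 4`. -/
theorem statement8 (t : ℕ) (ht : 3 ≤ t) (W : Type) [Fintype W] (H : SimpleGraph W)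
    (hcard : Fintype.card W = t) (hsp : ¬ HasMinor H (completeGraph (Fin 4))) :
    (∀ (V : Type) [Fintype V], ∀ G : SimpleGraph V,
        (2 * t - 4 : ℝ) ≤ avgDeg G → HasMinor G H) ∧
    minorF H ≤ 2 * t - 4 := by
  have hmain : ∀ (V : Type) [Fintype V], ∀ G : SimpleGraph V,
      (2 * t - 4 : ℝ) ≤ avgDeg G → HasMinor G H := by
    intro V _ G hG
    obtain ⟨k, rfl⟩ : ∃ k, t = k + 2 := ⟨t - 2, by omega⟩
    have hk : 1 ≤ k := by omega
    have hk' : (1 : ℝ) ≤ k := by exact_mod_cast hk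
    push_cast at hG
    unfold avgDeg at hG
    have hV : 0 < Nat.card V := by
      -- for empty `V` the average degree has the junk value `0`
      rcases Nat.eq_zero_or_pos (Nat.card V) with h | h
      · rw [h] at hG
        simp at hG
        linarith
      · exact h
    have hV' : (0 : ℝ) < Nat.card V := by exact_mod_cast hV
    rw [le_div_iff₀ hV'] at hG
    have hE : k * Nat.card V ≤ G.edgeSet.ncard := by
      rw [← Nat.card_coe_set_eq]
      have : (k : ℝ) * Nat.card V ≤ Nat.card G.edgeSet := by nlinarith
      exact_mod_cast this
    obtain ⟨V', hfin, G', a, b, hm, hab, htri⟩ := exists_minor_triangles k hk _ V G rfl hV hE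
    obtain ⟨f, hf, hadj, -⟩ := exists_embedding hab htri (k + 2) W H
      (by rw [Nat.card_eq_fintype_card, hcard]) le_rfl hsp
    exact hm.trans (hasMinor_of_injective_hom f hf hadj)
  refine ⟨hmain, csInf_le ⟨0, ?_⟩ hmain⟩
  -- a single vertex has average degree `0` and no minor on `t ≥ 3` vertices
  intro D hD
  by_contra! hneg
  obtain ⟨φ, hn, -, hd, -⟩ := hD Unit ⊥ (by simpa [avgDeg] using hneg.le)
  obtain ⟨w, w', hww⟩ := Fintype.exists_pair_of_one_lt_card (show 1 < Fintype.card W by omega)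
  obtain ⟨x, hx⟩ := hn w
  obtain ⟨y, hy⟩ := hn w'
  exact Set.disjoint_left.1 (hd hww) hx hy
end

section
/- For every 2-tree H on t ≥ 3 vertices, every graph G with average degree d(G) ≥ 2t − 4 contains H as a minor; in particular f(H) ≤ 2t − 4. -/
/-!
The hypothesis says that `G` has at least `(t - 2)|V|` edges. If some edge `uv` has at most
`t - 3` common neighbours, contracting it removes one vertex and at most `t - 2` edges, so the
inequality survives and induction on `|V|` applies (`contract_card_edge`), since a minor of a
contraction of `G` is a minor of `G` (`hasMinor_of_contract`). Otherwise every edge lies in at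
least `t - 2` triangles, and the 2-tree `H` embeds greedily as a subgraph along its construction
order (`exists_greedy`): when a vertex is to be attached to an embedded edge, at most `t - 3`
vertices other than the ends of that edge are occupied, so some common neighbour of the ends is
still free.
-/


open SimpleGraph

/-- `H` is a 2-tree: its vertices can be ordered `v₀, …, v_{n-1}` (`n ≥ 3`) so that the
first three form a triangle and, for each `k ≥ 3`, the neighbours of `v_k` among
`v₀, …, v_{k-1}` are exactly the two endpoints of an edge of the graph induced by
`v₀, …, v_{k-1}`. This is equivalent to being constructible from `K₃` by repeatedly
adding a new vertex adjacent to exactly the two endpoints of an existing edge. -/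
def IsTwoTree {V : Type*} [Fintype V] (H : SimpleGraph V) : Prop :=
  3 ≤ Fintype.card V ∧
  ∃ e : Fin (Fintype.card V) ≃ V,
    (∀ i j : Fin (Fintype.card V), (i : ℕ) < 3 → (j : ℕ) < 3 → i ≠ j → H.Adj (e i) (e j)) ∧
    ∀ k : Fin (Fintype.card V), 3 ≤ (k : ℕ) →
      ∃ i j : Fin (Fintype.card V), i < k ∧ j < k ∧ H.Adj (e i) (e j) ∧
        ∀ m : Fin (Fintype.card V), m < k → (H.Adj (e m) (e k) ↔ m = i ∨ m = j)

/-! ### Contracting an edge -/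

/-- The map sending `v` to `u` and fixing all other vertices. -/
noncomputable def contractMap {V : Type} (u v : V) (huv : u ≠ v) (x : V) : {x : V // x ≠ v} :=
  open Classical in if h : x = v then ⟨u, huv⟩ else ⟨x, h⟩

/-- The graph obtained from `G` by identifying `v` with `u`, on the vertex set `V \ {v}`; it is
the contraction of the edge `uv` when `u` and `v` are adjacent. -/
def contract {V : Type} (G : SimpleGraph V) (u v : V) (huv : u ≠ v) :
    SimpleGraph {x : V // x ≠ v} where
  Adj x y := x ≠ y ∧ ∃ a b, G.Adj a b ∧ contractMap u v huv a = x ∧ contractMap u v huv b = y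
  symm := ⟨by
    rintro x y ⟨h, a, b, hab, ha, hb⟩
    exact ⟨h.symm, b, a, hab.symm, hb, ha⟩⟩
  loopless := ⟨fun x h => h.1 rfl⟩

lemma contractMap_self {V : Type} (u v : V) (huv : u ≠ v) :
    contractMap u v huv v = ⟨u, huv⟩ := by simp [contractMap]

lemma contractMap_of_ne {V : Type} (u v : V) (huv : u ≠ v) (x : V) (h : x ≠ v) :
    contractMap u v huv x = ⟨x, h⟩ := by simp [contractMap, h]

/-- Two vertices of the preimage of `S` with the same image under the contraction are joined
inside that preimage, because the only nontrivial fibre is the edge `uv`. -/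
lemma fibre_reachable {V : Type} (G : SimpleGraph V) {u v : V} (huv : G.Adj u v)
    (S : Set {x : V // x ≠ v}) (a b : contractMap u v huv.ne ⁻¹' S)
    (h : contractMap u v huv.ne a = contractMap u v huv.ne b) :
    (G.induce (contractMap u v huv.ne ⁻¹' S)).Reachable a b := by
  obtain ⟨a, ha⟩ := a
  obtain ⟨b, hb⟩ := b
  simp only at h
  by_cases hav : a = v <;> by_cases hbv : b = v
  · subst hav; subst hbv; exact Reachable.refl _
  · subst hav
    rw [contractMap_self, contractMap_of_ne _ _ _ _ hbv] at h
    obtain rfl : u = b := congrArg Subtype.val h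
    exact Adj.reachable (by simpa using huv.symm)
  · subst hbv
    rw [contractMap_self, contractMap_of_ne _ _ _ _ hav] at h
    obtain rfl : a = u := congrArg Subtype.val h
    exact Adj.reachable (by simpa using huv)
  · rw [contractMap_of_ne _ _ _ _ hav, contractMap_of_ne _ _ _ _ hbv] at h
    obtain rfl : a = b := congrArg Subtype.val h
    exact Reachable.refl _

lemma preimage_connected {V : Type} (G : SimpleGraph V) {u v : V} (huv : G.Adj u v)
    (S : Set {x : V // x ≠ v}) (hS : ((contract G u v huv.ne).induce S).Connected) :
    (G.induce (contractMap u v huv.ne ⁻¹' S)).Connected := by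
  have lift : ∀ x y : S, ((contract G u v huv.ne).induce S).Walk x y →
      ∀ a b : contractMap u v huv.ne ⁻¹' S, contractMap u v huv.ne a = x →
        contractMap u v huv.ne b = y →
        (G.induce (contractMap u v huv.ne ⁻¹' S)).Reachable a b := by
    intro x y w
    induction w with
    | nil => intro a b ha hb; exact fibre_reachable G huv S a b (ha.trans hb.symm)
    | @cons x y z hxy w ih =>
      intro a b ha hb
      obtain ⟨-, c, d, hcd, hc, hd⟩ := hxy
      have hcS : c ∈ contractMap u v huv.ne ⁻¹' S := by
        rw [Set.mem_preimage, hc]; exact x.2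
      have hdS : d ∈ contractMap u v huv.ne ⁻¹' S := by
        rw [Set.mem_preimage, hd]; exact y.2
      have h1 := fibre_reachable G huv S a ⟨c, hcS⟩ (ha.trans hc.symm)
      have h2 : (G.induce (contractMap u v huv.ne ⁻¹' S)).Reachable ⟨c, hcS⟩ ⟨d, hdS⟩ :=
        Adj.reachable (by simpa using hcd)
      exact (h1.trans h2).trans (ih ⟨d, hdS⟩ b hd hb)
  obtain ⟨⟨x, hx⟩⟩ := hS.nonempty
  have : Nonempty (contractMap u v huv.ne ⁻¹' S) :=
    ⟨⟨x.1, by rw [Set.mem_preimage, contractMap_of_ne _ _ _ _ x.2]; exact hx⟩⟩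
  refine ⟨fun a b => ?_⟩
  obtain ⟨w⟩ := hS.preconnected ⟨_, a.2⟩ ⟨_, b.2⟩
  exact lift _ _ w a b rfl rfl

lemma hasMinor_of_contract_s9 {V W : Type} (G : SimpleGraph V) (H : SimpleGraph W) {u v : V}
    (huv : G.Adj u v) (h : HasMinor (contract G u v huv.ne) H) : HasMinor G H := by
  obtain ⟨φ, hne, hconn, hdisj, hadj⟩ := h
  refine ⟨fun w => contractMap u v huv.ne ⁻¹' φ w, fun w => ?_,
    fun w => preimage_connected G huv _ (hconn w), fun w w' hww => (hdisj hww).preimage _, ?_⟩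
  · obtain ⟨x, hx⟩ := hne w
    exact ⟨x.1, by rw [Set.mem_preimage, contractMap_of_ne _ _ _ _ x.2]; exact hx⟩
  · intro w w' hww
    obtain ⟨x, hx, y, hy, -, a, b, hab, rfl, rfl⟩ := hadj hww
    exact ⟨a, hx, b, hy, hab⟩

/-! ### Edges lost in a contraction -/

/-- Contracting an edge `uv` destroys at most `1 + c` edges, where `c` is the number of common
neighbours of `u` and `v`. -/
lemma contract_card_edge {V : Type} [Fintype V] (G : SimpleGraph V) {u v : V}
    (huv : G.Adj u v) :
    Nat.card G.edgeSet ≤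
      Nat.card (contract G u v huv.ne).edgeSet + ((G.commonNeighbors u v).ncard + 1) := by
  classical
  change G.edgeSet.ncard ≤ (contract G u v huv.ne).edgeSet.ncard + _
  -- the edges at `v` that are lost: `uv` itself and those that become parallel to an edge at `u`
  set L : Set (Sym2 V) := (fun y => s(v, y)) '' insert u (G.commonNeighbors u v) with hL
  have hLcard : L.ncard ≤ (G.commonNeighbors u v).ncard + 1 :=
    (Set.ncard_image_le (Set.toFinite _)).trans (Set.ncard_insert_le _ _)
  have h1 : G.edgeSet.ncard ≤ (G.edgeSet \ L).ncard + L.ncard :=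
    Set.ncard_le_ncard_sdiff_add_ncard _ _ (Set.toFinite _)
  have hmem : ∀ a b, s(a, b) ∈ L ↔
      (a = v ∧ (b = u ∨ G.Adj u b ∧ G.Adj v b)) ∨ (b = v ∧ (a = u ∨ G.Adj u a ∧ G.Adj v a)) := by
    intro a b
    simp only [hL, Set.mem_image, Set.mem_insert_iff, mem_commonNeighbors, Sym2.eq_iff]
    constructor
    · rintro ⟨y, hy, ⟨rfl, rfl⟩ | ⟨rfl, rfl⟩⟩
      · exact Or.inl ⟨rfl, hy⟩
      · exact Or.inr ⟨rfl, hy⟩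
    · rintro (⟨rfl, hy⟩ | ⟨rfl, hy⟩)
      · exact ⟨b, hy, Or.inl ⟨rfl, rfl⟩⟩
      · exact ⟨a, hy, Or.inr ⟨rfl, rfl⟩⟩
  have hval : ∀ a b, contractMap u v huv.ne a = contractMap u v huv.ne b ↔
      a = b ∨ (a = u ∧ b = v) ∨ (a = v ∧ b = u) := by
    intro a b
    have := huv.ne
    by_cases ha : a = v <;> by_cases hb : b = v <;> simp [contractMap, ha, hb] <;> grind
  have h2 : (G.edgeSet \ L).ncard ≤ (contract G u v huv.ne).edgeSet.ncard := by
    refine Set.ncard_le_ncard_of_injOn (Sym2.map (contractMap u v huv.ne)) ?_ ?_ (Set.toFinite _)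
    · intro e
      induction e using Sym2.ind with
      | _ a b =>
        rintro ⟨he, hn⟩
        rw [mem_edgeSet] at he
        rw [hmem] at hn
        rw [Sym2.map_mk, mem_edgeSet]
        refine ⟨fun h => ?_, a, b, he, rfl, rfl⟩
        have hne := he.ne
        rw [hval] at h
        grind
    · intro e he e' he' heq
      induction e using Sym2.ind with
      | _ a b =>
        induction e' using Sym2.ind with
        | _ c d =>
          obtain ⟨he, hn⟩ := he
          obtain ⟨he', hn'⟩ := he'
          rw [mem_edgeSet] at he he'
          rw [hmem] at hn hn'
          simp only [Sym2.map_mk, Sym2.eq_iff, hval] at heq ⊢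
          have := he.symm
          have := he'.symm
          grind
  omega

/-! ### Greedy embedding of a 2-tree -/

/-- If every edge of `G` lies in at least `n - 2` triangles, then the first `k` vertices of a
graph built by attaching each vertex to at most the two ends of an earlier edge embed in `G`. -/
lemma exists_greedy {V : Type} [Fintype V] (G : SimpleGraph V) {n : ℕ}
    (A : Fin n → Fin n → Prop) (hsymm : ∀ i j, A i j → A j i) (hirr : ∀ i, ¬ A i i)
    (hA : ∀ k : Fin n, 2 ≤ (k : ℕ) → ∃ i j : Fin n, i < k ∧ j < k ∧ A i j ∧
      ∀ m, m < k → A m k → m = i ∨ m = j)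
    (hG : ∀ u v, G.Adj u v → n - 2 ≤ (G.commonNeighbors u v).ncard)
    {a b : V} (hab : G.Adj a b) (k : ℕ) (hk2 : 2 ≤ k) (hkn : k ≤ n) :
    ∃ f : Fin n → V, (∀ i j : Fin n, (i : ℕ) < k → (j : ℕ) < k → f i = f j → i = j) ∧
      ∀ i j : Fin n, (i : ℕ) < k → (j : ℕ) < k → A i j → G.Adj (f i) (f j) := by
  classical
  induction k, hk2 using Nat.le_induction with
  | base =>
    refine ⟨fun i => if (i : ℕ) = 0 then a else b, ?_, ?_⟩
    · intro i j hi hj h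
      have := hab.ne
      ext
      grind
    · intro i j hi hj h
      have hij : i ≠ j := fun e => hirr i (e ▸ h)
      have hij' : (i : ℕ) ≠ j := fun e => hij (Fin.ext e)
      have := hab.symm
      grind
  | succ k hk2 ih =>
    obtain ⟨f, hinj, hadj⟩ := ih (by omega)
    obtain ⟨i, j, hi, hj, hij, hm⟩ := hA ⟨k, hkn⟩ hk2
    have hi' : (i : ℕ) < k := hi
    have hj' : (j : ℕ) < k := hj
    have hne : i ≠ j := fun e => hirr i (e ▸ hij)
    have hfij := hadj i j hi' hj' hij
    -- the occupied vertices other than `f i` and `f j`, which are not common neighbours anyway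
    let T : Finset V := ((((Finset.Iio (⟨k, hkn⟩ : Fin n)).erase i).erase j).image f)
    have hT : T.card < (G.commonNeighbors (f i) (f j)).toFinset.card := by
      have h1 : T.card ≤ k - 2 := by
        refine Finset.card_image_le.trans ?_
        rw [Finset.card_erase_of_mem, Finset.card_erase_of_mem, Fin.card_Iio]
        · simp only; omega
        · simpa using hi
        · simp only [Finset.mem_erase, Finset.mem_Iio]; exact ⟨hne.symm, hj⟩
      have h2 := hG _ _ hfij
      rw [Set.ncard_eq_toFinset_card'] at h2
      omega
    obtain ⟨x, hx, hxT⟩ := Finset.exists_mem_notMem_of_card_lt_card hT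
    rw [Set.mem_toFinset, mem_commonNeighbors] at hx
    have hfresh : ∀ m : Fin n, (m : ℕ) < k → f m ≠ x := by
      intro m hmk hfx
      by_cases hmi : m = i
      · subst hmi; exact hx.1.ne hfx
      by_cases hmj : m = j
      · subst hmj; exact hx.2.ne hfx
      refine hxT (Finset.mem_image.2 ⟨m, ?_, hfx⟩)
      simp only [Finset.mem_erase, Finset.mem_Iio]
      exact ⟨hmj, hmi, hmk⟩
    have hcases : ∀ m : Fin n, (m : ℕ) < k + 1 → m = ⟨k, hkn⟩ ∨ ((m : ℕ) < k ∧ m ≠ ⟨k, hkn⟩) := by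
      intro m hmk
      by_cases h : (m : ℕ) = k
      · exact Or.inl (Fin.ext h)
      · exact Or.inr ⟨by omega, fun e => h (congrArg Fin.val e)⟩
    have hnew : ∀ m : Fin n, (m : ℕ) < k → A m ⟨k, hkn⟩ → G.Adj (f m) x := by
      intro m hmk hmA
      rcases hm m hmk hmA with rfl | rfl
      · exact hx.1
      · exact hx.2
    refine ⟨Function.update f ⟨k, hkn⟩ x, ?_, ?_⟩
    · intro p q hp hq h
      rcases hcases p hp with rfl | ⟨hp, hp'⟩ <;> rcases hcases q hq with rfl | ⟨hq, hq'⟩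
      · rfl
      · rw [Function.update_self, Function.update_of_ne hq'] at h
        exact absurd h.symm (hfresh q hq)
      · rw [Function.update_self, Function.update_of_ne hp'] at h
        exact absurd h (hfresh p hp)
      · rw [Function.update_of_ne hp', Function.update_of_ne hq'] at h
        exact hinj p q hp hq h
    · intro p q hp hq h
      rcases hcases p hp with rfl | ⟨hp, hp'⟩ <;> rcases hcases q hq with rfl | ⟨hq, hq'⟩
      · exact absurd h (hirr _)
      · rw [Function.update_self, Function.update_of_ne hq']
        exact (hnew q hq (hsymm _ _ h)).symm
      · rw [Function.update_self, Function.update_of_ne hp']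
        exact hnew p hp h
      · rw [Function.update_of_ne hp', Function.update_of_ne hq']
        exact hadj p q hp hq h

lemma hasMinor_of_triangles {V W : Type} [Fintype V] [Fintype W] (G : SimpleGraph V)
    (H : SimpleGraph W) (htt : IsTwoTree H)
    (hG : ∀ u v, G.Adj u v → Fintype.card W - 2 ≤ (G.commonNeighbors u v).ncard)
    {a b : V} (hab : G.Adj a b) : HasMinor G H := by
  obtain ⟨h3, e, htri, hstep⟩ := htt
  obtain ⟨f, hinj, hadj⟩ := exists_greedy G (fun i j => H.Adj (e i) (e j))
    (fun i j h => h.symm) (fun i h => h.ne rfl) (by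
      intro k hk
      by_cases hk3 : 3 ≤ (k : ℕ)
      · obtain ⟨i, j, hi, hj, hij, hm⟩ := hstep k hk3
        exact ⟨i, j, hi, hj, hij, fun m hmk h => (hm m hmk).1 h⟩
      -- the third vertex of the initial triangle is attached to the edge between the first two
      · refine ⟨⟨0, by omega⟩, ⟨1, by omega⟩, ?_, ?_, htri _ _ (by simp) (by simp) (by simp), ?_⟩
        · rw [Fin.lt_def]; simp only; omega
        · rw [Fin.lt_def]; simp only; omega
        · intro m hm _
          rw [Fin.lt_def] at hm
          simp only [Fin.ext_iff]
          omega) hG hab (Fintype.card W) (by omega) le_rfl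
  refine ⟨fun w => {f (e.symm w)}, fun w => Set.singleton_nonempty _, fun w => ?_, ?_, ?_⟩
  · have : Nonempty ({f (e.symm w)} : Set V) := ⟨⟨_, rfl⟩⟩
    exact ⟨fun x y => by rw [Subsingleton.elim x y]⟩
  · intro w w' hww
    rw [Set.disjoint_singleton]
    exact fun h => hww (e.symm.injective (hinj _ _ (Fin.is_lt _) (Fin.is_lt _) h))
  · intro w w' hww
    exact ⟨_, rfl, _, rfl, hadj _ _ (Fin.is_lt _) (Fin.is_lt _) (by simpa using hww)⟩

/-! ### Induction on the number of vertices -/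

lemma hasMinor_of_card_edge {W : Type} [Fintype W] (H : SimpleGraph W) (htt : IsTwoTree H)
    (n : ℕ) : ∀ (V : Type) [Fintype V] (G : SimpleGraph V), Fintype.card V = n → 0 < n →
      (Fintype.card W - 2) * n ≤ Nat.card G.edgeSet → HasMinor G H := by
  have h3 := htt.1
  induction n with
  | zero => intro V _ G _ h; omega
  | succ n ih =>
    intro V _ G hV _ hE
    classical
    have hpos : 0 < Nat.card G.edgeSet :=
      lt_of_lt_of_le (Nat.mul_pos (by omega) (Nat.succ_pos n)) hE
    obtain ⟨⟨e, he⟩⟩ := (Nat.card_pos_iff.1 hpos).1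
    induction e using Sym2.ind with
    | _ a b =>
      rw [mem_edgeSet] at he
      by_cases hG : ∀ u v, G.Adj u v → Fintype.card W - 2 ≤ (G.commonNeighbors u v).ncard
      · exact hasMinor_of_triangles G H htt hG he
      · push Not at hG
        obtain ⟨u, v, huv, hlt⟩ := hG
        have hcard : Fintype.card {x : V // x ≠ v} = n := by
          rw [Fintype.card_subtype_compl, Fintype.card_subtype_eq, hV]; rfl
        refine hasMinor_of_contract_s9 G H huv (ih _ _ hcard ?_ ?_)
        · rw [← hcard]
          exact Fintype.card_pos_iff.2 ⟨⟨u, huv.ne⟩⟩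
        · have := contract_card_edge G huv
          rw [Nat.mul_succ] at hE
          omega

/-- For every 2-tree `H` on `t ≥ 3` vertices, every graph `G` with average
degree `d(G) ≥ 2t − 4` contains `H` as a minor; in particular `f(H) ≤ 2t − 4`. -/
theorem statement9 (t : ℕ) (ht : 3 ≤ t) (W : Type) [Fintype W] (H : SimpleGraph W)
    (hcard : Fintype.card W = t) (htt : IsTwoTree H) :
    (∀ (V : Type) [Fintype V], ∀ G : SimpleGraph V,
        (2 * t - 4 : ℝ) ≤ avgDeg G → HasMinor G H) ∧
    minorF H ≤ 2 * t - 4 := by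
  have main : ∀ (V : Type) [Fintype V], ∀ G : SimpleGraph V,
      (2 * t - 4 : ℝ) ≤ avgDeg G → HasMinor G H := by
    intro V _ G hd
    have ht' : (3 : ℝ) ≤ t := by exact_mod_cast ht
    unfold avgDeg at hd
    -- the graph without vertices has average degree `0 / 0 = 0`, below the threshold
    have hpos : 0 < Nat.card V := by
      rcases Nat.eq_zero_or_pos (Nat.card V) with h | h
      · rw [h] at hd
        simp only [Nat.cast_zero, div_zero] at hd
        linarith
      · exact h
    have hpos' : (0 : ℝ) < Nat.card V := by exact_mod_cast hpos
    rw [le_div_iff₀ hpos'] at hd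
    refine hasMinor_of_card_edge H htt (Nat.card V) V G Nat.card_eq_fintype_card.symm hpos ?_
    rw [hcard]
    have : (((t - 2) * Nat.card V : ℕ) : ℝ) ≤ (Nat.card G.edgeSet : ℕ) := by
      rw [Nat.cast_mul, Nat.cast_sub (by omega), Nat.cast_ofNat]
      linarith
    exact_mod_cast this
  refine ⟨main, csInf_le ⟨0, ?_⟩ main⟩
  -- a negative `D` would make the graph without vertices contain `H` as a minor
  intro D hD
  by_contra! hneg
  obtain ⟨φ, hne, -⟩ := hD Empty ⊥ (by simpa [avgDeg] using hneg.le)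
  have : 0 < Fintype.card W := by omega
  obtain ⟨w⟩ := Fintype.card_pos_iff.1 this
  obtain ⟨x, -⟩ := hne w
  exact x.elim
end

section
/- Let t ≥ 3 be an integer and let G be a graph with at least one edge such that every edge of G lies in at least t − 2 triangles. Then every 2-tree with at most t vertices is isomorphic to a subgraph of G. -/
/-!
The embedding is greedy along the construction order `v₀, v₁, …` of the 2-tree. Place `v₀, v₁` on
any edge of `G`. Every later vertex `v_k` has all its earlier neighbours among the endpoints of an
edge `v_i v_j` already placed, so it may be sent to any unused common neighbour of the images of
`v_i, v_j`. There are at least `t - 2` common neighbours, while at most `k - 2 ≤ t - 3` of them are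
used, since the images of `v_i` and `v_j` are not common neighbours of themselves. This counting is
`exists_fresh_common_neighbor`; the induction is `exists_partial_embedding`.
-/

open SimpleGraph

/-- An edge inside the image of the first `k < t` vertices has a common neighbour outside it. -/
lemma exists_fresh_common_neighbor {V : Type*} [Finite V] {G : SimpleGraph V} {t n : ℕ}
    (htri : ∀ u v, G.Adj u v → t - 2 ≤ Nat.card ↥(G.neighborSet u ∩ G.neighborSet v))
    (f : Fin n → V) {k i j : Fin n} (hk : (k : ℕ) < t) (hi : i < k) (hj : j < k)
    (hij : G.Adj (f i) (f j)) :
    ∃ w, G.Adj (f i) w ∧ G.Adj (f j) w ∧ ∀ m < k, f m ≠ w := by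
  by_contra! hcon
  have hne : i ≠ j := by
    rintro rfl
    exact hij.ne rfl
  have hsub : G.neighborSet (f i) ∩ G.neighborSet (f j) ⊆
      f '' (((Finset.Iio k).erase i).erase j : Finset (Fin n)) := by
    rintro w ⟨hw1, hw2⟩
    obtain ⟨m, hm, rfl⟩ := hcon w hw1 hw2
    refine ⟨m, ?_, rfl⟩
    simp only [Finset.coe_erase, Set.mem_sdiff, Set.mem_singleton_iff, Finset.mem_coe,
      Finset.mem_Iio]
    refine ⟨⟨hm, ?_⟩, ?_⟩
    · rintro rfl
      exact G.loopless.irrefl _ hw1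
    · rintro rfl
      exact G.loopless.irrefl _ hw2
  have h1 := htri _ _ hij
  rw [Nat.card_coe_set_eq] at h1
  have h2 := (Set.ncard_le_ncard hsub).trans (Set.ncard_image_le (Finset.finite_toSet _))
  rw [Set.ncard_coe_finset, Finset.card_erase_of_mem (by simp [hne.symm, hj]),
    Finset.card_erase_of_mem (by simp [hi]), Fin.card_Iio] at h2
  have : (i : ℕ) < k := hi
  have : (j : ℕ) < k := hj
  have : (i : ℕ) ≠ j := fun h => hne (Fin.ext h)
  omega

/-- Greedy induction: `H` only needs to be 2-degenerate along the order of `Fin n`, with the earlier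
neighbours of each vertex from the third on contained in an earlier edge. The values of `f` at
indices `≥ m` are arbitrary. -/
lemma exists_partial_embedding {V : Type*} [Finite V] {G : SimpleGraph V} {t n : ℕ}
    (hedge : ∃ u v, G.Adj u v)
    (htri : ∀ u v, G.Adj u v → t - 2 ≤ Nat.card ↥(G.neighborSet u ∩ G.neighborSet v))
    (hn : n ≤ t) (H : SimpleGraph (Fin n))
    (hH : ∀ k : Fin n, 2 ≤ (k : ℕ) → ∃ i j, i < k ∧ j < k ∧ H.Adj i j ∧
      ∀ m < k, H.Adj m k → m = i ∨ m = j)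
    (m : ℕ) (hm : 2 ≤ m) (hmn : m ≤ n) :
    ∃ f : Fin n → V, (∀ a b : Fin n, a < b → (b : ℕ) < m →
      f a ≠ f b ∧ (H.Adj a b → G.Adj (f a) (f b))) := by
  induction m, hm using Nat.le_induction with
  | base =>
    obtain ⟨u, v, huv⟩ := hedge
    refine ⟨fun a => if (a : ℕ) = 0 then u else v, fun a b hab hb => ?_⟩
    have hab' : (a : ℕ) < b := hab
    have ha0 : (a : ℕ) = 0 := by omega
    have hb0 : (b : ℕ) ≠ 0 := by omega
    simp only [ha0, hb0, if_true, if_false]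
    exact ⟨huv.ne, fun _ => huv⟩
  | succ m hm ih =>
    obtain ⟨f, hf⟩ := ih (by omega)
    let k : Fin n := ⟨m, by omega⟩
    obtain ⟨i, j, hi, hj, hij, hk⟩ := hH k hm
    have hGij : G.Adj (f i) (f j) := by
      rcases lt_trichotomy i j with h | h | h
      · exact (hf i j h hj).2 hij
      · exact absurd h hij.ne
      · exact ((hf j i h hi).2 hij.symm).symm
    obtain ⟨w, hw1, hw2, hw3⟩ :=
      exists_fresh_common_neighbor htri f (k := k) (by simp only [k]; omega) hi hj hGij
    refine ⟨Function.update f k w, fun a b hab hb => ?_⟩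
    rcases Nat.lt_succ_iff_lt_or_eq.mp hb with hb | hb
    · have hbk : b < k := hb
      rw [Function.update_of_ne (hab.trans hbk).ne, Function.update_of_ne hbk.ne]
      exact hf a b hab hb
    · obtain rfl : b = k := Fin.ext hb
      rw [Function.update_of_ne hab.ne, Function.update_self]
      refine ⟨hw3 a hab, fun h => ?_⟩
      rcases hk a hab h with rfl | rfl
      · exact hw1
      · exact hw2

/-- Let `t ≥ 3` and let `G` be a graph with at least one edge such that
every edge of `G` lies in at least `t − 2` triangles (its endpoints have at least
`t − 2` common neighbours). Then every 2-tree with at most `t` vertices is isomorphic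
to a subgraph of `G`. -/
theorem statement11 (t : ℕ) (ht : 3 ≤ t) (V : Type) [Fintype V] (G : SimpleGraph V)
    (hedge : ∃ u v, G.Adj u v)
    (htri : ∀ u v, G.Adj u v → t - 2 ≤ Nat.card ↥(G.neighborSet u ∩ G.neighborSet v)) :
    ∀ (W : Type) [Fintype W], ∀ H : SimpleGraph W, IsTwoTree H → Fintype.card W ≤ t →
      ∃ f : W → V, Function.Injective f ∧ ∀ a b, H.Adj a b → G.Adj (f a) (f b) := by
  intro W _ H hH hWt
  obtain ⟨hcard, e, hbase, hstep⟩ := hH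
  obtain ⟨f, hf⟩ := exists_partial_embedding hedge htri hWt (H.comap e) (by
    intro k hk
    rcases hk.eq_or_lt with hk | hk
    · -- the third vertex is attached to the edge joining the first two
      refine ⟨⟨0, by omega⟩, ⟨1, by omega⟩, ?_, ?_, ?_, ?_⟩
      · simp only [Fin.lt_def]; omega
      · simp only [Fin.lt_def]; omega
      · exact hbase _ _ (by simp) (by simp) (by simp)
      · intro m hm _
        simp only [Fin.lt_def, Fin.ext_iff] at hm ⊢
        omega
    · obtain ⟨i, j, hi, hj, hij, h⟩ := hstep k hk
      exact ⟨i, j, hi, hj, hij, fun m hm => (h m hm).1⟩) _ (by omega) le_rfl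
  refine ⟨f ∘ e.symm, Function.Injective.comp ?_ e.symm.injective, fun a b hab => ?_⟩
  · intro a b hab
    by_contra hne
    rcases lt_or_gt_of_ne hne with h | h
    · exact (hf a b h b.2).1 hab
    · exact (hf b a h a.2).1 hab.symm
  · have hab' : H.Adj (e (e.symm a)) (e (e.symm b)) := by simpa using hab
    have hne : e.symm a ≠ e.symm b := e.symm.injective.ne hab.ne
    rcases lt_or_gt_of_ne hne with h | h
    · exact (hf _ _ h (Fin.is_lt _)).2 hab'
    · exact ((hf _ _ h (Fin.is_lt _)).2 hab'.symm).symm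
end

section
/- There is a constant c > 0 such that for all integers s ≥ 0 and t ≥ 3 with s ≤ 10⁻⁵·t/ln t, the complete bipartite graph K_{s,t} satisfies f(K_{s,t}) ≤ c·t. -/
/-!
A graph with at least `k|V|` edges, `k = 100t`, contains as a minor a graph `G'` on `n ≤ 2k` vertices
with minimum degree at least `k ≥ n / 2` (`exists_dense_minor`, Mader's argument). It therefore
suffices to find `K_{s,t}` in such a dense graph (`dense_hasMinor`).

In `G'` no three vertices have pairwise fewer than `n / 10` common neighbours, and this yields a set
`U` of linear size in which each vertex has at least `n / 10` common neighbours with almost all of `U`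
(`exists_codegree_set`). Let `W` be the set of vertices adjacent to at least a quarter of `U`; double
counting gives `|W| ≥ n / 4`. Choosing `O(log n)` vertices of `U` greedily dominates `W`, and these
vertices can be linked to a hub in `U` through common neighbours, even after removing few vertices
(`exists_star`). So there are `s` disjoint connected sets of size `O(log t)` each dominating `W`. As
`s ≤ 10⁻⁵ t / log t`, they use up only `O(t)` vertices with a small constant (`exists_rounds`), and at
least `t` vertices of `W` remain to serve as the other colour class of `K_{s,t}`.
-/

open SimpleGraph

/-! ### Minors, edge contraction and Mader's reduction -/

/-- Minors pass to supergraphs: an injective homomorphism carries branch sets to branch sets. -/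
theorem HasMinor.of_hom {V V' W : Type*} {G : SimpleGraph V} {G' : SimpleGraph V'}
    {H : SimpleGraph W} (f : G' →g G) (hf : Function.Injective f) (h : HasMinor G' H) :
    HasMinor G H := by
  obtain ⟨φ, h1, h2, h3, h4⟩ := h
  refine ⟨fun w => f '' φ w, fun w => (h1 w).image f, fun w => ?_, fun w w' hw => ?_, ?_⟩
  · obtain ⟨⟨x, hx⟩, hr⟩ := (connected_iff_exists_forall_reachable _).1 (h2 w)
    let g : G'.induce (φ w) →g G.induce (f '' φ w) :=
      ⟨fun y => ⟨f y.1, Set.mem_image_of_mem f y.2⟩, fun {a b} hab => f.map_adj hab⟩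
    refine (connected_iff_exists_forall_reachable _).2 ⟨g ⟨x, hx⟩, ?_⟩
    rintro ⟨_, y, hy, rfl⟩
    exact (hr ⟨y, hy⟩).map g
  · exact (Set.disjoint_image_iff hf).2 (h3 hw)
  · intro w w' hw
    obtain ⟨u, hu, v, hv, huv⟩ := h4 hw
    exact ⟨f u, ⟨u, hu, rfl⟩, f v, ⟨v, hv, rfl⟩, f.map_adj huv⟩

/-- The graph obtained from `G` by joining `u` to all neighbours of `v`. Deleting `v` from it gives
the contraction of the edge `uv`, with `u` as the new vertex; the deletion is performed separately,
by inducing on `{v}ᶜ`. -/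
def contractInto {V : Type*} (G : SimpleGraph V) (u v : V) : SimpleGraph V :=
  G ⊔ SimpleGraph.fromRel (fun a b => a = u ∧ G.Adj v b)

theorem contractInto_adj {V : Type*} (G : SimpleGraph V) (u v a b : V) :
    (contractInto G u v).Adj a b ↔
      G.Adj a b ∨ (a ≠ b ∧ ((a = u ∧ G.Adj v b) ∨ (b = u ∧ G.Adj v a))) := by
  simp [contractInto]

/-- A minor of the graph obtained by contracting the edge `uv` is a minor of `G`. -/
theorem HasMinor.of_contract {V W : Type*} {G : SimpleGraph V} {u v : V} (huv : G.Adj u v)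
    {H : SimpleGraph W} (h : HasMinor ((contractInto G u v).induce {v}ᶜ) H) :
    HasMinor G H := by
  obtain ⟨φ, h1, h2, h3, h4⟩ := h
  -- the branch set of `w` is the preimage of `φ w` under the map sending `v` to `u`
  let ψ : W → Set V := fun w => {x | (∃ h : x ≠ v, (⟨x, h⟩ : ({v}ᶜ : Set V)) ∈ φ w) ∨
    (x = v ∧ ∃ h : u ≠ v, (⟨u, h⟩ : ({v}ᶜ : Set V)) ∈ φ w)}
  have hin : ∀ w (a : ({v}ᶜ : Set V)), a ∈ φ w → a.1 ∈ ψ w := fun w a ha => Or.inl ⟨a.2, ha⟩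
  have hv : ∀ w (a : ({v}ᶜ : Set V)), a ∈ φ w → a.1 = u → v ∈ ψ w := by
    rintro w ⟨a, ha'⟩ ha rfl
    exact Or.inr ⟨rfl, ha', ha⟩
  have hadj : ∀ a b : ({v}ᶜ : Set V), ((contractInto G u v).induce {v}ᶜ).Adj a b →
      G.Adj a b ∨ (a.1 = u ∧ G.Adj v b) ∨ (b.1 = u ∧ G.Adj v a) := by
    intro a b hab
    have := (contractInto_adj G u v a b).1 hab
    tauto
  have hreach : ∀ w (a b : φ w), (((contractInto G u v).induce {v}ᶜ).induce (φ w)).Adj a b →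
      (G.induce (ψ w)).Reachable ⟨a.1.1, hin w a.1 a.2⟩ ⟨b.1.1, hin w b.1 b.2⟩ := by
    intro w a b hab
    rcases hadj a.1 b.1 hab with h | ⟨h, h'⟩ | ⟨h, h'⟩
    · exact Adj.reachable h
    · have e1 : (G.induce (ψ w)).Adj ⟨a.1.1, hin w a.1 a.2⟩ ⟨v, hv w a.1 a.2 h⟩ := by
        simpa [h] using huv
      have e2 : (G.induce (ψ w)).Adj ⟨v, hv w a.1 a.2 h⟩ ⟨b.1.1, hin w b.1 b.2⟩ := h'
      exact e1.reachable.trans e2.reachable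
    · have e1 : (G.induce (ψ w)).Adj ⟨b.1.1, hin w b.1 b.2⟩ ⟨v, hv w b.1 b.2 h⟩ := by
        simpa [h] using huv
      have e2 : (G.induce (ψ w)).Adj ⟨v, hv w b.1 b.2 h⟩ ⟨a.1.1, hin w a.1 a.2⟩ := h'
      exact (e1.reachable.trans e2.reachable).symm
  refine ⟨ψ, fun w => ?_, fun w => ?_, fun w w' hw => ?_, fun w w' hw => ?_⟩
  · obtain ⟨x, hx⟩ := h1 w
    exact ⟨x, hin w x hx⟩
  · obtain ⟨x, hr⟩ := (connected_iff_exists_forall_reachable _).1 (h2 w)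
    have key : ∀ y : φ w, (G.induce (ψ w)).Reachable ⟨x.1.1, hin w x.1 x.2⟩
        ⟨y.1.1, hin w y.1 y.2⟩ := by
      intro y
      obtain ⟨p⟩ := hr y
      induction p with
      | nil => exact Reachable.refl _
      | cons hab _ ih => exact (hreach w _ _ hab).trans (ih (fun z => (Adj.reachable hab).symm.trans (hr z)))
    refine (connected_iff_exists_forall_reachable _).2 ⟨⟨x.1.1, hin w x.1 x.2⟩, ?_⟩
    rintro ⟨y, ⟨hy, hyw⟩ | ⟨rfl, hu, huw⟩⟩
    · exact key ⟨⟨y, hy⟩, hyw⟩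
    · refine (key ⟨⟨u, hu⟩, huw⟩).trans (Adj.reachable ?_)
      exact huv
  · refine Set.disjoint_left.2 ?_
    have := Set.disjoint_left.1 (h3 hw)
    rintro x (⟨hx, hxw⟩ | ⟨rfl, hu, huw⟩) (⟨hx', hxw'⟩ | ⟨hxv, hu', huw'⟩)
    · exact this hxw hxw'
    · exact hx hxv
    · exact hx' rfl
    · exact this huw huw'
  · obtain ⟨a, ha, b, hb, hab⟩ := h4 hw
    rcases hadj a b hab with h | ⟨h, h'⟩ | ⟨h, h'⟩
    · exact ⟨a, hin w a ha, b, hin w' b hb, h⟩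
    · exact ⟨v, hv w a ha h, b, hin w' b hb, h'⟩
    · exact ⟨a, hin w a ha, v, hv w' b hb h, h'.symm⟩

section
open Classical Finset

theorem edges_induce_compl {V : Type*} [Fintype V] (G : SimpleGraph V) (v : V) :
    Nat.card (G.induce {v}ᶜ).edgeSet + G.degree v = Nat.card G.edgeSet := by
  have h1 := G.card_edgeFinset_induce_compl_singleton v
  have h2 := G.card_edgeFinset_deleteIncidenceSet v
  have h3 : G.degree v ≤ #G.edgeFinset := G.degree_le_card_edgeFinset v
  rw [Nat.card_eq_fintype_card, Nat.card_eq_fintype_card, ← edgeFinset_card, ← edgeFinset_card]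
  convert_to #(G.induce {v}ᶜ).edgeFinset + G.degree v = #G.edgeFinset
  omega

/-- Contracting `uv` destroys at most one edge more than the number of triangles on `uv`. -/
theorem edges_contract {V : Type*} [Fintype V] (G : SimpleGraph V) {u v : V} (huv : G.Adj u v) :
    Nat.card G.edgeSet ≤ Nat.card ((contractInto G u v).induce {v}ᶜ).edgeSet + 1 +
      #(G.neighborFinset u ∩ G.neighborFinset v) := by
  have h1 := edges_induce_compl (contractInto G u v) v
  have hd : (contractInto G u v).degree v = G.degree v := by
    rw [← card_neighborFinset_eq_degree, ← card_neighborFinset_eq_degree]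
    congr 1
    ext x
    rw [mem_neighborFinset, mem_neighborFinset, contractInto_adj]
    constructor
    · rintro (h | ⟨_, ⟨rfl, h⟩ | ⟨rfl, h⟩⟩)
      · exact h
      · exact h
      · exact huv.symm
    · exact Or.inl
  -- the new edges join `u` to the neighbours of `v` outside the closed neighbourhood of `u`
  let D := ((G.neighborFinset v) \ (G.neighborFinset u)).erase u
  have hD : G.degree v ≤ #D + 1 + #(G.neighborFinset u ∩ G.neighborFinset v) := by
    have e1 : #(G.neighborFinset v \ G.neighborFinset u) +
        #(G.neighborFinset v ∩ G.neighborFinset u) = #(G.neighborFinset v) :=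
      Finset.card_sdiff_add_card_inter _ _
    have e2 : #(G.neighborFinset v \ G.neighborFinset u) - 1 ≤ #D := pred_card_le_card_erase
    rw [card_neighborFinset_eq_degree, inter_comm] at e1
    omega
  have hE : Nat.card G.edgeSet + #D ≤ Nat.card (contractInto G u v).edgeSet := by
    rw [Nat.card_eq_fintype_card, Nat.card_eq_fintype_card, ← edgeFinset_card, ← edgeFinset_card]
    have hinj : #(D.image (fun y => s(u, y))) = #D := by
      apply card_image_of_injective
      intro a b hab
      exact Sym2.congr_right.1 hab
    rw [← hinj, ← card_union_of_disjoint]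
    · apply card_le_card
      apply union_subset
      · exact edgeFinset_mono le_sup_left
      · intro e he
        obtain ⟨y, hy, rfl⟩ := mem_image.1 he
        simp only [D, mem_erase, mem_sdiff, mem_neighborFinset] at hy
        rw [mem_edgeFinset, mem_edgeSet, contractInto_adj]
        exact Or.inr ⟨hy.1.symm, Or.inl ⟨rfl, hy.2.1⟩⟩
    · rw [Finset.disjoint_left]
      intro e he he'
      obtain ⟨y, hy, rfl⟩ := mem_image.1 he'
      simp only [D, mem_erase, mem_sdiff, mem_neighborFinset] at hy
      simp only [mem_edgeFinset, mem_edgeSet] at he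
      exact hy.2.2 he
  omega

/-- Mader's reduction: a graph with at least `k|V|` edges contains as a minor a graph on at most `2k`
vertices with minimum degree at least `k`. Edges and isolated vertices are deleted and edges in fewer
than `k` triangles are contracted as long as the edge bound survives; in the final graph every edge
is in `k` triangles, and the neighbourhood of a vertex of degree at most `2k` is the required graph.
The conclusion is stated as a transfer of `H`-minors. -/
theorem exists_dense_minor {W : Type*} (H : SimpleGraph W) (k : ℕ) (hk : 1 ≤ k) (n m : ℕ) :
    ∀ (V : Type) [Fintype V] (G : SimpleGraph V), Nat.card V = n → Nat.card G.edgeSet = m →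
      1 ≤ Nat.card V → k * Nat.card V ≤ Nat.card G.edgeSet →
      ∃ (V' : Type) (_ : Fintype V') (G' : SimpleGraph V'),
        k ≤ Fintype.card V' ∧ Fintype.card V' ≤ 2 * k ∧ (∀ x, k ≤ G'.degree x) ∧
        (HasMinor G' H → HasMinor G H) := by
  induction n using Nat.strong_induction_on generalizing m with
  | _ n ihn =>
  induction m using Nat.strong_induction_on with
  | _ m ihm =>
  intro V _ G hn hm hV hE
  have hpos : 0 < Nat.card G.edgeSet := lt_of_lt_of_le (by positivity) hE
  have hcardc : ∀ v : V, Nat.card ({v}ᶜ : Set V) + 1 = Nat.card V := by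
    intro v
    have := Set.ncard_add_ncard_compl ({v} : Set V)
    rw [Set.ncard_singleton] at this
    rw [Nat.card_coe_set_eq]; omega
  obtain ⟨⟨e, he⟩⟩ : Nonempty G.edgeSet := (Nat.card_pos_iff.1 hpos).1
  have hV2 : 2 ≤ Nat.card V := by
    induction e with
    | _ a b =>
    have : a ≠ b := G.ne_of_adj he
    rw [Nat.card_eq_fintype_card]
    exact Fintype.one_lt_card_iff.2 ⟨a, b, this⟩
  by_cases h1 : k * Nat.card V < Nat.card G.edgeSet
  · have hc : Nat.card (G.deleteEdges {e}).edgeSet + 1 = Nat.card G.edgeSet := by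
      rw [edgeSet_deleteEdges, Nat.card_coe_set_eq, Nat.card_coe_set_eq]
      exact Set.ncard_sdiff_singleton_add_one he
    obtain ⟨V', i, G', a, b, c, d⟩ :=
      ihm _ (by omega) V (G.deleteEdges {e}) hn rfl hV (by omega)
    exact ⟨V', i, G', a, b, c, fun h => (d h).of_hom
      (SimpleGraph.Hom.ofLE (G.deleteEdges_le {e})) Function.injective_id⟩
  by_cases h2 : ∃ v, G.degree v = 0
  · obtain ⟨v, hv⟩ := h2
    have e1 := edges_induce_compl G v
    have e2 := hcardc v
    obtain ⟨V', i, G', a, b, c, d⟩ :=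
      ihn _ (by omega) _ ({v}ᶜ : Set V) (G.induce {v}ᶜ) rfl rfl (by omega) (by nlinarith)
    exact ⟨V', i, G', a, b, c, fun h => (d h).of_hom
      (SimpleGraph.Embedding.induce _).toHom Subtype.val_injective⟩
  by_cases h3 : ∃ u v, G.Adj u v ∧ #(G.neighborFinset u ∩ G.neighborFinset v) < k
  · obtain ⟨u, v, huv, hlt⟩ := h3
    have e1 := edges_contract G huv
    have e2 := hcardc v
    obtain ⟨V', i, G', a, b, c, d⟩ :=
      ihn _ (by omega) _ ({v}ᶜ : Set V) ((contractInto G u v).induce {v}ᶜ) rfl rfl (by omega)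
        (by nlinarith)
    exact ⟨V', i, G', a, b, c, fun h => (d h).of_contract huv⟩
  push Not at h1 h2 h3
  obtain ⟨v, -, hv⟩ : ∃ v ∈ (univ : Finset V), G.degree v ≤ 2 * k := by
    apply exists_le_of_sum_le
    · apply univ_nonempty_iff.2
      exact (Nat.card_pos_iff.1 (by omega)).1
    · rw [sum_degrees_eq_twice_card_edges, edgeFinset_card, ← Nat.card_eq_fintype_card]
      simp only [sum_const, card_univ, smul_eq_mul]
      rw [Nat.card_eq_fintype_card (α := V)] at h1
      nlinarith
  have hdeg : ∀ x : (G.neighborFinset v : Set V),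
      k ≤ (G.induce (G.neighborFinset v : Set V)).degree x := by
    intro x
    have hx : G.Adj v x := by simpa using x.2
    refine (h3 v x hx).trans ?_
    rw [← card_neighborFinset_eq_degree, ← card_map (Function.Embedding.subtype _)]
    apply card_le_card
    intro y hy
    simp only [mem_inter, mem_neighborFinset] at hy
    simp only [Finset.mem_map, mem_neighborFinset]
    exact ⟨⟨y, by simpa using hy.1⟩, hy.2, rfl⟩
  have hcard : Fintype.card (G.neighborFinset v : Set V) = G.degree v := by
    rw [← card_neighborFinset_eq_degree]; exact Fintype.card_coe _
  refine ⟨(G.neighborFinset v : Set V), inferInstance, G.induce _, ?_, by omega, hdeg, fun h =>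
    h.of_hom (SimpleGraph.Embedding.induce _).toHom Subtype.val_injective⟩
  obtain ⟨x, hx⟩ : (G.neighborFinset v).Nonempty := by
    rw [← card_pos, card_neighborFinset_eq_degree]
    exact Nat.pos_of_ne_zero (h2 v)
  exact (hdeg ⟨x, hx⟩).trans (degree_lt_card_verts _).le

/-! ### Dominating connected sets in dense graphs -/

/-- Greedy domination: if every vertex of `W` sees a tenth of `A`, then `m` suitable vertices of `A`
dominate all but a `(9/10)^m` fraction of `W`. -/
theorem greedy_dominate {V : Type*} [Fintype V] (G : SimpleGraph V) (A W : Finset V)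
    (hA : A.Nonempty) (hW : ∀ w ∈ W, #A ≤ 10 * #(G.neighborFinset w ∩ A)) (m : ℕ) :
    ∃ L ⊆ A, #L ≤ m ∧ 10 ^ m * #{w ∈ W | ∀ a ∈ L, ¬ G.Adj w a} ≤ 9 ^ m * #W := by
  induction m with
  | zero => exact ⟨∅, by simp, by simp, by simp⟩
  | succ m ih =>
    obtain ⟨L, hLA, hLm, hL⟩ := ih
    set R := {w ∈ W | ∀ a ∈ L, ¬ G.Adj w a} with hR
    -- some vertex of `A` has at least `|R| / 10` neighbours in `R`, by double counting
    obtain ⟨a, haA, ha⟩ : ∃ a ∈ A, #R ≤ 10 * #{w ∈ R | G.Adj w a} := by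
      apply exists_le_of_sum_le hA
      have hdc : ∑ a ∈ A, #{w ∈ R | G.Adj w a} = ∑ w ∈ R, #{a ∈ A | G.Adj w a} :=
        (sum_card_bipartiteAbove_eq_sum_card_bipartiteBelow (fun w a => G.Adj w a)).symm
      rw [← mul_sum, hdc, mul_sum, sum_const, smul_eq_mul, mul_comm, ← smul_eq_mul, ← sum_const]
      apply sum_le_sum
      intro w hw
      refine (hW w (mem_filter.1 hw).1).trans (Nat.mul_le_mul_left _ (card_le_card ?_))
      intro a
      simp only [mem_inter, mem_neighborFinset, mem_filter]
      tauto
    refine ⟨insert a L, insert_subset haA hLA, (card_insert_le _ _).trans (by omega), ?_⟩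
    have hsplit : {w ∈ W | ∀ b ∈ insert a L, ¬ G.Adj w b} = {w ∈ R | ¬ G.Adj w a} := by
      ext w
      simp only [hR, mem_filter, forall_mem_insert]
      tauto
    have hc := card_filter_add_card_filter_not (s := R) (fun w => G.Adj w a)
    rw [hsplit, pow_succ, pow_succ]
    have : 10 * #{w ∈ R | ¬ G.Adj w a} ≤ 9 * #R := by omega
    calc 10 ^ m * 10 * #{w ∈ R | ¬ G.Adj w a} = 10 ^ m * (10 * #{w ∈ R | ¬ G.Adj w a}) := by ring
      _ ≤ 10 ^ m * (9 * #R) := Nat.mul_le_mul_left _ this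
      _ = 9 * (10 ^ m * #R) := by ring
      _ ≤ 9 * (9 ^ m * #W) := Nat.mul_le_mul_left _ hL
      _ = 9 ^ m * 9 * #W := by ring

/-- If the minimum degree is at least `n / 2`, there is a linear-sized set `U` in which every vertex
has at least `n / 10` common neighbours with all but a twentieth of `U`. No three vertices have
pairwise codegree below `n / 10`, so if some `x` has low codegree with many vertices, these have
pairwise high codegree and form `U`; otherwise `U` is the whole vertex set. -/
theorem exists_codegree_set {V : Type*} [Fintype V] [Nonempty V] (G : SimpleGraph V)
    (hdeg : ∀ x, Fintype.card V ≤ 2 * G.degree x) :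
    ∃ U : Finset V, Fintype.card V ≤ 20 * #U ∧ ∀ h ∈ U,
      20 * #{y ∈ U | 10 * #(G.neighborFinset h ∩ G.neighborFinset y) < Fintype.card V} ≤ #U := by
  set n := Fintype.card V with hn
  have hnpos : 0 < n := Fintype.card_pos
  by_cases hx : ∃ x, n ≤ 20 *
      #{y ∈ (univ : Finset V) | 10 * #(G.neighborFinset x ∩ G.neighborFinset y) < n}
  · obtain ⟨x, hx⟩ := hx
    refine ⟨_, hx, fun h hh => ?_⟩
    convert Nat.zero_le _
    rw [Nat.mul_eq_zero, card_eq_zero]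
    right
    apply filter_eq_empty_iff.2
    intro y hy hhy
    -- three neighbourhoods of size `n / 2` with small pairwise intersections do not fit in `V`
    replace hh := (mem_filter.1 hh).2
    replace hy := (mem_filter.1 hy).2
    have e1 := card_union_add_card_inter (G.neighborFinset x) (G.neighborFinset h)
    have e2 := card_union_add_card_inter (G.neighborFinset x ∪ G.neighborFinset h)
      (G.neighborFinset y)
    have e3 : #((G.neighborFinset x ∪ G.neighborFinset h) ∩ G.neighborFinset y) ≤
        #(G.neighborFinset x ∩ G.neighborFinset y) +
        #(G.neighborFinset h ∩ G.neighborFinset y) := by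
      rw [union_inter_distrib_right]; exact card_union_le _ _
    have e4 : #(G.neighborFinset x ∪ G.neighborFinset h ∪ G.neighborFinset y) ≤ n :=
      card_le_univ _
    have d1 := hdeg x
    have d2 := hdeg h
    have d3 := hdeg y
    simp only [card_neighborFinset_eq_degree] at e1 e2
    omega
  · push Not at hx
    refine ⟨univ, by rw [card_univ]; omega, fun h _ => ?_⟩
    exact (hx h).le

/-- At least a quarter of all vertices see a quarter of `U`. -/
theorem exists_many_rich {V : Type*} [Fintype V] (G : SimpleGraph V)
    (hdeg : ∀ x, Fintype.card V ≤ 2 * G.degree x) (U : Finset V) (hU : 0 < #U) :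
    Fintype.card V ≤ 4 * #{w ∈ (univ : Finset V) | #U ≤ 4 * #(G.neighborFinset w ∩ U)} := by
  set n := Fintype.card V with hn
  set W := {w ∈ (univ : Finset V) | #U ≤ 4 * #(G.neighborFinset w ∩ U)} with hW
  have h1 : ∑ w : V, #(G.neighborFinset w ∩ U) = ∑ u ∈ U, G.degree u := by
    have := sum_card_bipartiteAbove_eq_sum_card_bipartiteBelow (s := (univ : Finset V)) (t := U)
      (fun w a => G.Adj w a)
    convert this using 2 with w _ u _
    · congr 1; ext x; simp [bipartiteAbove, and_comm]
    · rw [← card_neighborFinset_eq_degree]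
      congr 1; ext x; simp [bipartiteBelow, G.adj_comm]
  have h2 : #U * n ≤ 2 * ∑ u ∈ U, G.degree u := by
    rw [mul_sum, ← smul_eq_mul, ← sum_const]
    exact sum_le_sum fun u _ => hdeg u
  have h3 : ∑ w : V, 4 * #(G.neighborFinset w ∩ U) ≤ ∑ w : V, (#U + if w ∈ W then 4 * #U else 0) := by
    apply sum_le_sum
    intro w _
    split_ifs with h
    · have : #(G.neighborFinset w ∩ U) ≤ #U := card_le_card inter_subset_right
      omega
    · have : ¬ (#U ≤ 4 * #(G.neighborFinset w ∩ U)) := fun h' => h (by simp [hW, h'])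
      omega
  rw [← mul_sum, h1, sum_add_distrib, sum_const, ← sum_filter, sum_const, filter_mem_eq_inter,
    univ_inter, card_univ, smul_eq_mul, smul_eq_mul, ← hn] at h3
  have : #U * n ≤ #U * (4 * #W) := by nlinarith
  exact Nat.le_of_mul_le_mul_left this hU

/-- Off any small set `X` there is a connected set `S` of size at most `2m + 1` dominating `W`: a hub
`h ∈ U`, at most `m` vertices of `U` chosen greedily to dominate `W`, each having high codegree with
`h`, and for each of these a common neighbour with `h` outside `X`. -/
theorem exists_star {V : Type*} [Fintype V] [Nonempty V] (G : SimpleGraph V)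
    (U W X : Finset V)
    (hUn : Fintype.card V ≤ 20 * #U) (hU : ∀ h ∈ U,
      20 * #{y ∈ U | 10 * #(G.neighborFinset h ∩ G.neighborFinset y) < Fintype.card V} ≤ #U)
    (hW : ∀ w ∈ W, #U ≤ 4 * #(G.neighborFinset w ∩ U))
    (hX : 1000 * #X ≤ Fintype.card V) (m : ℕ) (hm : 9 ^ m * Fintype.card V < 10 ^ m) :
    ∃ S : Finset V, Disjoint S X ∧ #S ≤ 2 * m + 1 ∧ (G.induce (S : Set V)).Connected ∧
      ∀ w ∈ W, ∃ a ∈ S, G.Adj w a := by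
  set n := Fintype.card V with hn
  have hnpos : 0 < n := Fintype.card_pos
  obtain ⟨h, hh⟩ : (U \ X).Nonempty := by
    rw [← card_pos]
    have := le_card_sdiff X U
    omega
  obtain ⟨hhU, hhX⟩ := mem_sdiff.1 hh
  set B := {y ∈ U | 10 * #(G.neighborFinset h ∩ G.neighborFinset y) < n} with hB
  have hBc : 20 * #B ≤ #U := hU h hhU
  have hA : ((U \ X) \ B).Nonempty := by
    rw [← card_pos]
    have := le_card_sdiff X U
    have := le_card_sdiff B (U \ X)
    omega
  obtain ⟨L, hLA, hLm, hL⟩ := greedy_dominate G ((U \ X) \ B) W hA (by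
    intro w hw
    have h1 := hW w hw
    have h2 : #((U \ X) \ B) ≤ #U := card_le_card (sdiff_subset.trans sdiff_subset)
    have h3 : G.neighborFinset w ∩ ((U \ X) \ B) = ((G.neighborFinset w ∩ U) \ X) \ B := by
      ext; simp only [mem_inter, mem_sdiff]; tauto
    have h4 := le_card_sdiff X (G.neighborFinset w ∩ U)
    have h5 := le_card_sdiff B ((G.neighborFinset w ∩ U) \ X)
    rw [h3]
    omega) m
  have hdom : ∀ w ∈ W, ∃ a ∈ L, G.Adj w a := by
    have h0 : #{w ∈ W | ∀ a ∈ L, ¬ G.Adj w a} = 0 := by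
      have hWn : #W ≤ n := card_le_univ _
      have := Nat.mul_le_mul_left (9 ^ m) hWn
      by_contra hne
      have := Nat.mul_le_mul_left (10 ^ m) (Nat.one_le_iff_ne_zero.2 hne)
      omega
    intro w hw
    by_contra! hcon
    exact (filter_eq_empty_iff.1 (card_eq_zero.1 h0)) hw hcon
  have hconn : ∀ a : L, ∃ c, c ∉ X ∧ G.Adj h c ∧ G.Adj a c := by
    intro a
    have ha := mem_sdiff.1 (hLA a.2)
    have ha' := (mem_sdiff.1 ha.1).1
    have hcod : n ≤ 10 * #(G.neighborFinset h ∩ G.neighborFinset a) := by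
      by_contra! hlt
      exact ha.2 (by simp [hB, ha', hlt])
    have : ((G.neighborFinset h ∩ G.neighborFinset a) \ X).Nonempty := by
      rw [← card_pos]
      have := le_card_sdiff X (G.neighborFinset h ∩ G.neighborFinset a)
      omega
    obtain ⟨c, hc⟩ := this
    simp only [mem_sdiff, mem_inter, mem_neighborFinset] at hc
    exact ⟨c, hc.2, hc.1.1, hc.1.2⟩
  choose c hcX hhc hac using hconn
  refine ⟨insert h (L ∪ univ.image c), ?_, ?_, ?_, ?_⟩
  · rw [Finset.disjoint_left]
    intro x hx
    simp only [mem_insert, mem_union, mem_image, mem_univ, true_and] at hx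
    rcases hx with rfl | hx | ⟨a, rfl⟩
    · exact hhX
    · exact (mem_sdiff.1 (mem_sdiff.1 (hLA hx)).1).2
    · exact hcX a
  · have e1 : #(univ.image c) ≤ #L := card_image_le.trans (by simp)
    have e2 := card_union_le L (univ.image c)
    have e3 := card_insert_le h (L ∪ univ.image c)
    omega
  · have hhS : h ∈ ((insert h (L ∪ univ.image c) : Finset V) : Set V) := by simp
    have hcS : ∀ a, c a ∈ ((insert h (L ∪ univ.image c) : Finset V) : Set V) := by simp
    have hr : ∀ a, (G.induce ((insert h (L ∪ univ.image c) : Finset V) : Set V)).Reachable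
        ⟨h, hhS⟩ ⟨c a, hcS a⟩ := fun a => Adj.reachable (hhc a)
    refine (connected_iff_exists_forall_reachable _).2 ⟨⟨h, hhS⟩, ?_⟩
    rintro ⟨x, hx⟩
    have hx' := hx
    simp only [coe_insert, coe_union, coe_image, Set.mem_insert_iff, Set.mem_union, mem_coe,
      coe_univ, Set.image_univ, Set.mem_range] at hx'
    rcases hx' with rfl | hx' | ⟨a, rfl⟩
    · exact Reachable.refl _
    · exact (hr ⟨x, hx'⟩).trans (Adj.reachable (hac ⟨x, hx'⟩).symm)
    · exact hr a
  · intro w hw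
    obtain ⟨a, ha, hwa⟩ := hdom w hw
    exact ⟨a, by simp [ha], hwa⟩

/-- If sets with property `P` and size at most `q` exist off every small set, then `s` pairwise disjoint
ones exist as long as `s * q` is small. -/
theorem exists_disjoint_family {V : Type*} [Fintype V] (P : Finset V → Prop) (q N : ℕ)
    (hP : ∀ X : Finset V, 1000 * #X ≤ N → ∃ S, Disjoint S X ∧ #S ≤ q ∧ P S) (s : ℕ)
    (hs : 1000 * (s * q) ≤ N) :
    ∃ S : Fin s → Finset V, (Pairwise fun i j => Disjoint (S i) (S j)) ∧ (∀ i, P (S i)) ∧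
      #(univ.biUnion S) ≤ s * q := by
  induction s with
  | zero => exact ⟨fun i => ∅, fun i => i.elim0, fun i => i.elim0, by simp⟩
  | succ s ih =>
    obtain ⟨S, h1, h2, h3⟩ := ih (by nlinarith)
    obtain ⟨T, hT1, hT2, hT3⟩ := hP (univ.biUnion S) (by nlinarith)
    have hd : ∀ i, Disjoint T (S i) := fun i =>
      hT1.mono_right (subset_biUnion_of_mem S (mem_univ i))
    refine ⟨Fin.cons T S, ?_, ?_, ?_⟩
    · intro i j hij
      induction i using Fin.cases with
      | zero =>
        induction j using Fin.cases with
        | zero => exact absurd rfl hij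
        | succ j => exact hd j
      | succ i =>
        induction j using Fin.cases with
        | zero => exact (hd i).symm
        | succ j => exact h1 (fun h => hij (congrArg Fin.succ h))
    · intro i
      induction i using Fin.cases with
      | zero => exact hT3
      | succ i => exact h2 i
    · have : univ.biUnion (Fin.cons T S : Fin (s + 1) → Finset V) = T ∪ univ.biUnion S := by
        ext x
        simp [Fin.exists_fin_succ]
      rw [this]
      have := card_union_le T (univ.biUnion S)
      nlinarith

/-- A graph on `n` vertices with minimum degree at least `n / 2` has a `K_{s,t}`-minor if `5t ≤ n` and
`s` disjoint dominating sets of size `2m + 1 = O(log n)` occupy at most `n / 1000` vertices: these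
sets are the branch sets on the side of size `s`, and unused single vertices that they all dominate
are the branch sets on the other side. -/
theorem dense_hasMinor {V : Type*} [Fintype V] [Nonempty V] (G : SimpleGraph V)
    (hdeg : ∀ x, Fintype.card V ≤ 2 * G.degree x) (s t m : ℕ)
    (hm : 9 ^ m * Fintype.card V < 10 ^ m)
    (hs : 1000 * (s * (2 * m + 1)) ≤ Fintype.card V) (ht : 5 * t ≤ Fintype.card V) :
    HasMinor G (completeBipartiteGraph (Fin s) (Fin t)) := by
  have hnpos : 0 < Fintype.card V := Fintype.card_pos
  obtain ⟨U, hUn, hU⟩ := exists_codegree_set G hdeg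
  have hWn := exists_many_rich G hdeg U (by omega)
  set W := {w ∈ (univ : Finset V) | #U ≤ 4 * #(G.neighborFinset w ∩ U)} with hW
  obtain ⟨S, hS1, hS2, hS3⟩ := exists_disjoint_family
    (fun S : Finset V => (G.induce (S : Set V)).Connected ∧ ∀ w ∈ W, ∃ a ∈ S, G.Adj w a)
    (2 * m + 1) (Fintype.card V)
    (fun X hX => exists_star G U W X hUn hU (fun w hw => (mem_filter.1 hw).2) hX m hm) s hs
  obtain ⟨f⟩ : Nonempty (Fin t ↪ (W \ univ.biUnion S : Finset V)) := by
    apply Function.Embedding.nonempty_of_card_le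
    rw [Fintype.card_fin, Fintype.card_coe]
    have := le_card_sdiff (univ.biUnion S) W
    omega
  have hfS : ∀ j i, (f j : V) ∉ S i := fun j i h =>
    (mem_sdiff.1 (f j).2).2 (mem_biUnion.2 ⟨i, mem_univ i, h⟩)
  have hadj : ∀ i j, ∃ a ∈ S i, G.Adj (f j) a := fun i j =>
    (hS2 i).2 _ (mem_sdiff.1 (f j).2).1
  refine ⟨Sum.elim (fun i => (S i : Set V)) (fun j => {(f j : V)}), ?_, ?_, ?_, ?_⟩
  · rintro (i | j)
    · obtain ⟨x⟩ := (hS2 i).1.nonempty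
      exact ⟨x.1, x.2⟩
    · exact Set.singleton_nonempty _
  · rintro (i | j)
    · exact (hS2 i).1
    · refine (connected_iff_exists_forall_reachable _).2 ⟨⟨f j, rfl⟩, ?_⟩
      rintro ⟨x, rfl⟩
      exact Reachable.refl _
  · rintro (i | i) (j | j) hij
    · exact Finset.disjoint_coe.2 (hS1 (fun h => hij (by rw [h])))
    · exact Set.disjoint_singleton_right.2 (hfS j i)
    · exact Set.disjoint_singleton_left.2 (hfS i j)
    · refine Set.disjoint_singleton.2 (fun h => hij ?_)
      rw [f.injective (Subtype.ext h)]
  · rintro (i | i) (j | j) hij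
    · simp at hij
    · obtain ⟨a, ha, h⟩ := hadj i j
      exact ⟨a, ha, f j, rfl, h.symm⟩
    · obtain ⟨a, ha, h⟩ := hadj j i
      exact ⟨f i, rfl, a, ha, h⟩
    · simp at hij
end

/-! ### Numerical estimates and conclusion -/

/-- For `n` of order `t`, a number `m = O(log t)` of greedy rounds is enough to dominate everything,
and `s` sets of size `2m + 1` fit into `n / 1000` vertices. -/
theorem exists_rounds {s t n : ℕ} (ht : 3 ≤ t)
    (hs : (s : ℝ) ≤ (1 / 100000 : ℝ) * t / Real.log t)
    (hn1 : 100 * t ≤ n) (hn2 : n ≤ 200 * t) :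
    ∃ m : ℕ, 9 ^ m * n < 10 ^ m ∧ 1000 * (s * (2 * m + 1)) ≤ n := by
  have ht' : (3 : ℝ) ≤ t := by exact_mod_cast ht
  have hlt : 1 ≤ Real.log t := by
    rw [Real.le_log_iff_exp_le (by linarith)]
    linarith [Real.exp_one_lt_d9]
  have hnpos : (0 : ℝ) < n := by
    have : 0 < n := by omega
    exact_mod_cast this
  have hln : Real.log n ≤ 6 * Real.log t := by
    have h : (n : ℝ) ≤ (t : ℝ) ^ 6 := by
      have h1 : (n : ℝ) ≤ 200 * t := by exact_mod_cast hn2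
      have h2 : (3 : ℝ) ^ 5 ≤ (t : ℝ) ^ 5 := by gcongr
      nlinarith
    have := Real.log_le_log hnpos h
    rwa [Real.log_pow] at this
  have hln0 : 0 ≤ Real.log n := Real.log_natCast_nonneg n
  refine ⟨⌈10 * Real.log n⌉₊ + 1, ?_, ?_⟩
  · -- `log (10 / 9) ≥ 1 / 10`, so `m > 10 * log n` rounds suffice
    set m := ⌈10 * Real.log n⌉₊ + 1 with hm
    have hm1 : 10 * Real.log n < m := by
      have := Nat.le_ceil (10 * Real.log n)
      push_cast [hm]; linarith
    have h9 : (1 : ℝ) / 10 ≤ Real.log (10 / 9) := by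
      have := Real.one_sub_inv_le_log_of_pos (x := 10 / 9) (by norm_num)
      norm_num at this ⊢; linarith
    have hlt2 : Real.log n < Real.log ((10 / 9 : ℝ) ^ m) := by
      rw [Real.log_pow]; nlinarith
    have h3 := (Real.log_lt_log_iff hnpos (by positivity)).1 hlt2
    rw [div_pow, lt_div_iff₀ (by positivity)] at h3
    rw [mul_comm]
    exact_mod_cast h3
  · have hm2 : ((2 * (⌈10 * Real.log n⌉₊ + 1) + 1 : ℕ) : ℝ) ≤ 125 * Real.log t := by
      have := Nat.ceil_lt_add_one (a := 10 * Real.log n) (by positivity)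
      push_cast; linarith
    have hs' : (s : ℝ) * Real.log t ≤ 1 / 100000 * t := by
      rwa [le_div_iff₀ (by linarith)] at hs
    have h4 : (s : ℝ) * ((2 * (⌈10 * Real.log n⌉₊ + 1) + 1 : ℕ) : ℝ) ≤ s * (125 * Real.log t) :=
      mul_le_mul_of_nonneg_left hm2 (Nat.cast_nonneg s)
    have h5 : (100 : ℝ) * t ≤ n := by exact_mod_cast hn1
    have h6 : (1000 : ℝ) * (s * ((2 * (⌈10 * Real.log n⌉₊ + 1) + 1 : ℕ) : ℝ)) ≤ n := by nlinarith
    exact_mod_cast h6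

/-- There is a constant `c > 0` such that for all integers `s ≥ 0` and
`t ≥ 3` with `s ≤ 10⁻⁵·t/ln t`, the complete bipartite graph `K_{s,t}` satisfies
`f(K_{s,t}) ≤ c·t`. -/
theorem statement13 :
    ∃ c : ℝ, 0 < c ∧
      ∀ s t : ℕ, 3 ≤ t → (s : ℝ) ≤ (1 / 100000 : ℝ) * t / Real.log t →
        minorF (completeBipartiteGraph (Fin s) (Fin t)) ≤ c * t := by
  classical
  refine ⟨200, by norm_num, fun s t ht hs => ?_⟩
  have ht0 : (0 : ℝ) < t := by
    have : 0 < t := by omega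
    exact_mod_cast this
  refine csInf_le ⟨0, fun D hD => ?_⟩ ?_
  · -- the graph without vertices has average degree `0 / 0 = 0` and no nonempty minor
    by_contra! hneg
    obtain ⟨φ, h1, -⟩ := hD Empty ⊥ (by simpa [avgDeg] using hneg.le)
    obtain ⟨x, -⟩ := h1 (Sum.inr ⟨0, by omega⟩)
    exact x.elim
  · intro V _ G hG
    have hV : 1 ≤ Nat.card V := by
      by_contra! h0
      have h0' : Nat.card V = 0 := by omega
      rw [avgDeg, h0', Nat.cast_zero, div_zero] at hG
      linarith
    have hE : (100 * t) * Nat.card V ≤ Nat.card G.edgeSet := by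
      have hVpos : (0 : ℝ) < Nat.card V := by exact_mod_cast hV
      rw [avgDeg, le_div_iff₀ hVpos] at hG
      have : ((100 : ℝ) * t) * Nat.card V ≤ Nat.card G.edgeSet := by linarith
      exact_mod_cast this
    obtain ⟨V', _, G', hn1, hn2, hdeg, hminor⟩ := exists_dense_minor
      (completeBipartiteGraph (Fin s) (Fin t)) (100 * t) (by omega) _ _ V G rfl rfl hV hE
    obtain ⟨m, hm1, hm2⟩ := exists_rounds ht hs hn1 (by omega)
    have : Nonempty V' := Fintype.card_pos_iff.1 (by omega)
    apply hminor
    refine dense_hasMinor G' (fun x => ?_) s t m hm1 hm2 (by omega)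
    refine hn2.trans (Nat.mul_le_mul_left 2 ?_)
    convert hdeg x
end
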